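/- Let (G,C) be a strongly connected inhomogeneous Mauldin–Williams graph in ℝ^d satisfying the SOSC such that ∫₀^∞ e^{−s₀(G)t} N_{e^{−t}}(C_i) dt < ∞ for all i ∈ V. If G_M = τℤ for some τ > 0, then for every i ∈ V there exist δ > 0 and a τ-periodic function h_i : ℝ → [δ, ∞) such that lim_{n→∞} N_{e^{−(nτ+y)}}(K_i^C) / (h_i(y) e^{s₀(G)(nτ+y)}) = 1 for all y ∈ [0, τ). -/

import Mathlib

open Set Filter Topology MeasureTheory Metric

noncomputable section

/-- Points of `ℝ^d`. -/
abbrev Pt (d : ℕ) := EuclideanSpace ℝ (Fin d)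

/-- The `r`-covering number of `A ⊆ ℝ^d`: the least number of closed balls of
radius `r` needed to cover `A`. -/
noncomputable def coveringNumber {d : ℕ} (A : Set (Pt d)) (r : ℝ) : ℕ :=
  sInf {k : ℕ | ∃ c : Fin k → Pt d, A ⊆ ⋃ i, Metric.closedBall (c i) r}

/-- A Mauldin–Williams graph in `ℝ^d` over a finite directed multigraph with
vertex type `V` and edge type `E`: each vertex `i` carries a non-empty compact
set `X i` equal to the closure of its interior, and each edge `e` carries a
contractive similarity `S e` of ratio `r e ∈ (0,1)` mapping `X (term e)` into
`X (init e)`. -/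
structure MWGraph (d : ℕ) (V E : Type) [Fintype V] [Fintype E] where
  init : E → V
  term : E → V
  X : V → Set (Pt d)
  S : E → Pt d → Pt d
  r : E → ℝ
  X_nonempty : ∀ i, (X i).Nonempty
  X_compact : ∀ i, IsCompact (X i)
  X_regular : ∀ i, closure (interior (X i)) = X i
  r_pos : ∀ e, 0 < r e
  r_lt_one : ∀ e, r e < 1
  S_maps : ∀ e, Set.MapsTo (S e) (X (term e)) (X (init e))
  S_sim : ∀ e x y, dist (S e x) (S e y) = r e * dist x y

namespace MWGraph

variable {d : ℕ} {V E : Type} [Fintype V] [Fintype E]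

variable (G : MWGraph d V E)

/-- `G.IsPathFrom j γ` holds iff the list of edges `γ` is a directed path
starting at vertex `j`. -/
def IsPathFrom : V → List E → Prop
  | _, [] => True
  | j, e :: es => G.init e = j ∧ IsPathFrom (G.term e) es

/-- Terminal vertex of the path `γ` starting at `j`. -/
def pathTerm : V → List E → V
  | j, [] => j
  | _, e :: es => pathTerm (G.term e) es

/-- `S_γ = S_{e₁} ∘ ⋯ ∘ S_{eₙ}` (with `S_∅ = id`). -/
def pathMap : List E → Pt d → Pt d
  | [] => id
  | e :: es => G.S e ∘ pathMap es

/-- `r_γ = r_{e₁} ⋯ r_{eₙ}` (with `r_∅ = 1`). -/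
def pathRatio (γ : List E) : ℝ := (γ.map G.r).prod

/-- The underlying multigraph is strongly connected: for every ordered pair of
vertices there is a (non-empty) directed path from the first to the second. -/
def StronglyConnected : Prop :=
  ∀ i j : V, ∃ γ : List E, γ ≠ [] ∧ G.IsPathFrom i γ ∧ G.pathTerm i γ = j

/-- `K` is the list of graph-directed self-similar sets of `G`: the unique list
of non-empty compact sets with `K i = ⋃_{e ∈ E_i} S_e (K (term e))`. -/
def IsAttractor (K : V → Set (Pt d)) : Prop :=
  (∀ i, IsCompact (K i)) ∧ (∀ i, (K i).Nonempty) ∧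
    ∀ i, K i = ⋃ e ∈ {e : E | G.init e = i}, G.S e '' K (G.term e)

/-- `C` is an admissible list of condensation sets: compact subsets of the `X i`. -/
def IsCondensation (C : V → Set (Pt d)) : Prop :=
  ∀ i, IsCompact (C i) ∧ C i ⊆ G.X i

/-- `K` is the list of inhomogeneous graph-directed self-similar sets of `(G, C)`:
the unique list of non-empty compact sets with
`K i = ⋃_{e ∈ E_i} S_e (K (term e)) ∪ C i`. -/
def IsInhomAttractor (C : V → Set (Pt d)) (K : V → Set (Pt d)) : Prop :=
  (∀ i, IsCompact (K i)) ∧ (∀ i, (K i).Nonempty) ∧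
    ∀ i, K i = (⋃ e ∈ {e : E | G.init e = i}, G.S e '' K (G.term e)) ∪ C i

/-- `G` satisfies the open set condition with the open sets `U`. -/
def IsOSCWith (U : V → Set (Pt d)) : Prop :=
  (∀ i, (U i).Nonempty) ∧ (∀ i, IsOpen (U i)) ∧ (∀ i, Bornology.IsBounded (U i)) ∧
    (∀ i, U i ⊆ G.X i) ∧
    (∀ i, (⋃ e ∈ {e : E | G.init e = i}, G.S e '' U (G.term e)) ⊆ U i) ∧
    ∀ e e' : E, G.init e = G.init e' → e ≠ e' →
      Disjoint (G.S e '' U (G.term e)) (G.S e' '' U (G.term e'))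

/-- The set `{-log r_γ : γ a directed cycle of G}`. -/
def cycleSet : Set ℝ :=
  {x : ℝ | ∃ (j : V) (γ : List E), γ ≠ [] ∧ G.IsPathFrom j γ ∧ G.pathTerm j γ = j ∧
    x = -Real.log (G.pathRatio γ)}

/-- `G_M`, the smallest closed additive subgroup of `ℝ` containing
`{-log r_γ : γ a directed cycle}`. -/
def GM : Set ℝ := closure ((AddSubgroup.closure (G.cycleSet) : AddSubgroup ℝ) : Set ℝ)

variable [DecidableEq V]

/-- The matrix `A_G^s` with entries `(A_G^s)_{ij} = Σ_{e ∈ E_{ij}} r_e^s`. -/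
def Amatrix (s : ℝ) : Matrix V V ℝ :=
  Matrix.of fun i j => ∑ e : E, if G.init e = i ∧ G.term e = j then G.r e ^ s else 0

end MWGraph

/-- Spectral radius of a real square matrix: the largest modulus of a complex
eigenvalue. -/
noncomputable def matrixSpectralRadius {n : Type} [Fintype n] [DecidableEq n]
    (A : Matrix n n ℝ) : ℝ :=
  sSup {x : ℝ | ∃ μ : ℂ, μ ∈ spectrum ℂ (A.map (fun a : ℝ => (a : ℂ))) ∧ x = ‖μ‖}

/-- `s` is the (unique) exponent `s ≥ 0` with `ρ(A_G^s) = 1`, i.e. `s = s₀(G)`. -/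
def IsS0 {d : ℕ} {V E : Type} [Fintype V] [Fintype E] [DecidableEq V]
    (G : MWGraph d V E) (s : ℝ) : Prop :=
  0 ≤ s ∧ matrixSpectralRadius (G.Amatrix s) = 1

open scoped ENNReal

/-!
The scaled covering number `m_i t = exp (-s₀ t) N(KC i, exp (-t))` satisfies, up to an error, the
renewal equation `m_i t = ∑_{e ∈ E_i} r_e ^ s₀ m_{t(e)} (t + log r_e)`. The error is at most the
scaled covering number of `C i`, whose sum along a lattice of times is controlled by the integral
hypothesis, plus that of the collars, the parts of the pieces `KC j` close to the complement of
`U j`. The collars satisfy the same inequality, but by the SOSC some path leads away from them, so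
their weighted sums lose a definite proportion and must be finite as well. Normalised by a Perron
vector of the matrix at `s₀`, the equation is that of a function harmonic, up to a summable error,
for a Markov chain on the lattice. A maximum principle at translate limits shows that such a
function converges, and a packing argument inside `U i` bounds the limit away from `0`.
-/

/-! ### Covering numbers -/

section Covering

variable {d : ℕ} {A B : Set (Pt d)} {r : ℝ}

lemma coveringNumber_le_card {s : Finset (Pt d)} (h : A ⊆ ⋃ c ∈ s, closedBall c r) :
    coveringNumber A r ≤ s.card := by
  refine Nat.sInf_le ⟨fun i => (s.equivFin.symm i : Pt d), fun x hx => ?_⟩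
  obtain ⟨c, hc, hxc⟩ := mem_iUnion₂.1 (h hx)
  exact mem_iUnion.2 ⟨s.equivFin ⟨c, hc⟩, by simpa using hxc⟩

lemma exists_finset_cover (hA : Bornology.IsBounded A) (hr : 0 < r) :
    ∃ s : Finset (Pt d), s.card ≤ coveringNumber A r ∧ A ⊆ ⋃ c ∈ s, closedBall c r := by
  classical
  obtain ⟨t, ht⟩ : ∃ t : Finset (Pt d), A ⊆ ⋃ c ∈ t, ball c r := by
    obtain ⟨t, htf, ht⟩ := Metric.totallyBounded_iff.1
      (hA.isCompact_closure.totallyBounded.subset subset_closure) r hr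
    exact ⟨htf.toFinset, by simpa using ht⟩
  have hne : {k : ℕ | ∃ c : Fin k → Pt d, A ⊆ ⋃ i, closedBall (c i) r}.Nonempty := by
    refine ⟨t.card, fun i => (t.equivFin.symm i : Pt d), fun x hx => ?_⟩
    obtain ⟨c, hc, hxc⟩ := mem_iUnion₂.1 (ht hx)
    exact mem_iUnion.2 ⟨t.equivFin ⟨c, hc⟩, by simpa using ball_subset_closedBall hxc⟩
  obtain ⟨c, hc⟩ := Nat.sInf_mem hne
  refine ⟨Finset.univ.image c, Finset.card_image_le.trans_eq (Finset.card_fin _), hc.trans ?_⟩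
  exact iUnion_subset fun i =>
    subset_biUnion_of_mem (u := fun c => closedBall c r) (Finset.mem_image_of_mem c (by simp))

lemma coveringNumber_mono (hB : Bornology.IsBounded B) (hr : 0 < r) (h : A ⊆ B) :
    coveringNumber A r ≤ coveringNumber B r := by
  obtain ⟨s, hs, hc⟩ := exists_finset_cover hB hr
  exact (coveringNumber_le_card (h.trans hc)).trans hs

lemma coveringNumber_anti (hA : Bornology.IsBounded A) (hr : 0 < r) {r' : ℝ} (h : r ≤ r') :
    coveringNumber A r' ≤ coveringNumber A r := by
  obtain ⟨s, hs, hc⟩ := exists_finset_cover hA hr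
  exact (coveringNumber_le_card
    (hc.trans (iUnion₂_mono fun c _ => closedBall_subset_closedBall h))).trans hs

lemma coveringNumber_empty : coveringNumber (∅ : Set (Pt d)) r = 0 :=
  Nat.le_zero.1 (coveringNumber_le_card (s := ∅) (by simp))

lemma coveringNumber_union_le (hA : Bornology.IsBounded A) (hB : Bornology.IsBounded B)
    (hr : 0 < r) : coveringNumber (A ∪ B) r ≤ coveringNumber A r + coveringNumber B r := by
  classical
  obtain ⟨s, hs, hc⟩ := exists_finset_cover hA hr
  obtain ⟨s', hs', hc'⟩ := exists_finset_cover hB hr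
  refine (coveringNumber_le_card (s := s ∪ s') ?_).trans
    ((Finset.card_union_le _ _).trans (add_le_add hs hs'))
  rw [Finset.set_biUnion_union]
  exact union_subset_union hc hc'

lemma coveringNumber_biUnion_le {ι : Type*} {I : Finset ι} {F : ι → Set (Pt d)}
    (hF : ∀ i ∈ I, Bornology.IsBounded (F i)) (hr : 0 < r) :
    coveringNumber (⋃ i ∈ I, F i) r ≤ ∑ i ∈ I, coveringNumber (F i) r := by
  classical
  induction I using Finset.induction_on with
  | empty => simp [coveringNumber_empty]
  | insert a I ha ih =>
    have hF' : ∀ i ∈ I, Bornology.IsBounded (F i) := fun i hi => hF i (Finset.mem_insert_of_mem hi)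
    rw [Finset.set_biUnion_insert, Finset.sum_insert ha]
    refine (coveringNumber_union_le (hF a (Finset.mem_insert_self a I))
      ((Bornology.isBounded_biUnion_finset I).2 hF') hr).trans ?_
    gcongr
    exact ih hF'

lemma card_le_coveringNumber (hA : Bornology.IsBounded A) (hr : 0 < r) {s : Finset (Pt d)}
    (hs : ↑s ⊆ A) (hd : (s : Set (Pt d)).PairwiseDisjoint fun x => closedBall x r) :
    s.card ≤ coveringNumber A r := by
  obtain ⟨t, ht, hc⟩ := exists_finset_cover hA hr
  refine le_trans ?_ ht
  have h : ∀ x ∈ s, ∃ c ∈ t, x ∈ closedBall c r := fun x hx => by simpa using hc (hs hx)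
  choose! f hft hf using h
  refine Finset.card_le_card_of_injOn f hft fun x hx y hy hxy => ?_
  by_contra hne
  refine Set.disjoint_left.1 (hd hx hy hne) (mem_closedBall_comm.1 (hf x hx)) ?_
  rw [hxy]
  exact mem_closedBall_comm.1 (hf y hy)

/- A ball of an optimal cover of the union that meets two of the `A i` only covers points of
the `B i`; the remaining balls meet at most one `A i`, so they are counted once on both sides. -/
lemma sum_coveringNumber_le {ι : Type*} {I : Finset ι} {A B : ι → Set (Pt d)}
    (hA : ∀ i ∈ I, Bornology.IsBounded (A i)) (hB : ∀ i ∈ I, Bornology.IsBounded (B i))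
    (hr : 0 < r)
    (hAB : ∀ i ∈ I, ∀ j ∈ I, i ≠ j → ∀ x ∈ A i, ∀ y ∈ A j, dist x y ≤ 2 * r → x ∈ B i) :
    ∑ i ∈ I, coveringNumber (A i) r ≤
      coveringNumber (⋃ i ∈ I, A i) r + ∑ i ∈ I, coveringNumber (B i) r := by
  classical
  obtain ⟨s, hs, hc⟩ := exists_finset_cover ((Bornology.isBounded_biUnion_finset I).2 hA) hr
  let meets (i : ι) (c : Pt d) : Prop := (closedBall c r ∩ A i).Nonempty
  let own (i : ι) : Finset (Pt d) := {c ∈ s | meets i c ∧ ∀ j ∈ I, meets j c → j = i}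
  have own_disjoint : (I : Set ι).PairwiseDisjoint own := fun i hi j _ hij =>
    Finset.disjoint_left.2 fun c hci hcj =>
      hij ((Finset.mem_filter.1 hcj).2.2 i hi (Finset.mem_filter.1 hci).2.1)
  have card_own : ∑ i ∈ I, (own i).card ≤ coveringNumber (⋃ i ∈ I, A i) r := by
    rw [← Finset.card_biUnion own_disjoint]
    exact (Finset.card_le_card
      (Finset.biUnion_subset.2 fun i _ => Finset.filter_subset _ _)).trans hs
  have cover_own : ∀ i ∈ I, A i ⊆ (⋃ c ∈ own i, closedBall c r) ∪ B i := by
    intro i hi x hx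
    obtain ⟨c, hcs, hxc⟩ := mem_iUnion₂.1 (hc (mem_biUnion hi hx))
    by_cases hown : ∀ j ∈ I, meets j c → j = i
    · exact Or.inl (mem_biUnion (Finset.mem_filter.2 ⟨hcs, ⟨x, hxc, hx⟩, hown⟩) hxc)
    · push Not at hown
      obtain ⟨j, hj, ⟨y, hyc, hy⟩, hji⟩ := hown
      refine Or.inr (hAB i hi j hj hji.symm x hx y hy ?_)
      rw [mem_closedBall] at hxc hyc
      linarith [dist_triangle_right x y c]
  have hcount : ∀ i ∈ I, coveringNumber (A i) r ≤ (own i).card + coveringNumber (B i) r := by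
    intro i hi
    have hb : Bornology.IsBounded (⋃ c ∈ own i, closedBall c r) :=
      (Bornology.isBounded_biUnion_finset _).2 fun _ _ => isBounded_closedBall
    refine (coveringNumber_mono (hb.union (hB i hi)) hr (cover_own i hi)).trans
      ((coveringNumber_union_le hb (hB i hi) hr).trans ?_)
    gcongr
    exact coveringNumber_le_card le_rfl
  calc ∑ i ∈ I, coveringNumber (A i) r
      ≤ ∑ i ∈ I, ((own i).card + coveringNumber (B i) r) := Finset.sum_le_sum hcount
    _ ≤ _ := by rw [Finset.sum_add_distrib]; gcongr

end Covering

section Similarity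

lemma surjective_of_dist_eq_mul {F : Type*} [NormedAddCommGroup F] [NormedSpace ℝ F]
    [StrictConvexSpace ℝ F] [FiniteDimensional ℝ F] {S : F → F} {c : ℝ} (hc : 0 < c)
    (hS : ∀ x y, dist (S x) (S y) = c * dist x y) : Function.Surjective S := by
  have hiso : Isometry fun x => c⁻¹ • S x := by
    refine Isometry.of_dist_eq fun x y => ?_
    rw [dist_smul₀, hS, Real.norm_of_nonneg (by positivity)]
    field_simp
  let _ : Inhabited F := ⟨0⟩
  have hsurj : Function.Surjective hiso.affineIsometryOfStrictConvexSpace :=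
    (hiso.affineIsometryOfStrictConvexSpace.toAffineIsometryEquiv rfl).surjective
  intro y
  obtain ⟨x, hx⟩ := hsurj (c⁻¹ • y)
  exact ⟨x, smul_right_injective _ (inv_ne_zero hc.ne') hx⟩

lemma image_closedBall_of_dist_eq_mul {X Y : Type*} [PseudoMetricSpace X] [PseudoMetricSpace Y]
    {S : X → Y} {c : ℝ} (hc : 0 < c) (hS : ∀ x y, dist (S x) (S y) = c * dist x y)
    (hsurj : Function.Surjective S) (x : X) (ρ : ℝ) :
    S '' closedBall x ρ = closedBall (S x) (c * ρ) := by
  refine Subset.antisymm ?_ fun z hz => ?_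
  · rintro _ ⟨y, hy, rfl⟩
    rw [mem_closedBall, hS]
    gcongr
    exact hy
  · obtain ⟨y, rfl⟩ := hsurj z
    rw [mem_closedBall, hS] at hz
    exact mem_image_of_mem S (le_of_mul_le_mul_left hz hc)

lemma isBounded_image_of_dist_eq_mul {X Y : Type*} [PseudoMetricSpace X] [PseudoMetricSpace Y]
    {S : X → Y} {c : ℝ} (hS : ∀ x y, dist (S x) (S y) = c * dist x y) {A : Set X}
    (hA : Bornology.IsBounded A) : Bornology.IsBounded (S '' A) := by
  have : LipschitzWith c.toNNReal S := LipschitzWith.of_dist_le_mul fun x y => by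
    rw [hS]
    gcongr
    exact Real.le_coe_toNNReal c
  exact this.isBounded_image hA

lemma coveringNumber_image {d : ℕ} {A : Set (Pt d)} {S : Pt d → Pt d} {c r : ℝ} (hc : 0 < c)
    (hS : ∀ x y, dist (S x) (S y) = c * dist x y) (hA : Bornology.IsBounded A) (hr : 0 < r) :
    coveringNumber (S '' A) (c * r) = coveringNumber A r := by
  classical
  have hsurj := surjective_of_dist_eq_mul hc hS
  apply le_antisymm
  · obtain ⟨s, hs, hcov⟩ := exists_finset_cover hA hr
    refine (coveringNumber_le_card (s := s.image S) ?_).trans (Finset.card_image_le.trans hs)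
    rintro _ ⟨x, hx, rfl⟩
    obtain ⟨y, hy, hxy⟩ := mem_iUnion₂.1 (hcov hx)
    refine mem_iUnion₂.2 ⟨S y, Finset.mem_image_of_mem _ hy, ?_⟩
    rw [← image_closedBall_of_dist_eq_mul hc hS hsurj]
    exact mem_image_of_mem _ hxy
  · obtain ⟨s, hs, hcov⟩ :=
      exists_finset_cover (isBounded_image_of_dist_eq_mul hS hA) (mul_pos hc hr)
    obtain ⟨g, hg⟩ := hsurj.hasRightInverse
    refine (coveringNumber_le_card (s := s.image g) ?_).trans (Finset.card_image_le.trans hs)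
    intro x hx
    obtain ⟨y, hy, hxy⟩ := mem_iUnion₂.1 (hcov (mem_image_of_mem S hx))
    refine mem_iUnion₂.2 ⟨g y, Finset.mem_image_of_mem _ hy, ?_⟩
    rw [mem_closedBall, ← hg y, hS] at hxy
    exact le_of_mul_le_mul_left hxy hc

end Similarity

/-- The covering number of `A` at scale `exp (-t)`, normalised by the growth rate `exp (s * t)`
expected of a set of dimension `s`. -/
def scaledCover {d : ℕ} (s : ℝ) (A : Set (Pt d)) (t : ℝ) : ℝ :=
  Real.exp (-s * t) * coveringNumber A (Real.exp (-t))

section ScaledCover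

variable {d : ℕ} {A B : Set (Pt d)} {s t : ℝ}

lemma scaledCover_nonneg : 0 ≤ scaledCover s A t := by
  unfold scaledCover
  positivity

lemma scaledCover_empty : scaledCover s (∅ : Set (Pt d)) t = 0 := by
  simp [scaledCover, coveringNumber_empty]

lemma scaledCover_mono (hB : Bornology.IsBounded B) (h : A ⊆ B) :
    scaledCover s A t ≤ scaledCover s B t := by
  unfold scaledCover
  gcongr
  exact coveringNumber_mono hB (Real.exp_pos _) h

lemma scaledCover_union_le (hA : Bornology.IsBounded A) (hB : Bornology.IsBounded B) :
    scaledCover s (A ∪ B) t ≤ scaledCover s A t + scaledCover s B t := by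
  simp only [scaledCover, ← mul_add]
  gcongr
  exact_mod_cast coveringNumber_union_le hA hB (Real.exp_pos _)

lemma scaledCover_biUnion_le {ι : Type*} {I : Finset ι} {F : ι → Set (Pt d)}
    (hF : ∀ i ∈ I, Bornology.IsBounded (F i)) :
    scaledCover s (⋃ i ∈ I, F i) t ≤ ∑ i ∈ I, scaledCover s (F i) t := by
  simp only [scaledCover, ← Finset.mul_sum]
  gcongr
  exact_mod_cast coveringNumber_biUnion_le hF (Real.exp_pos _)

lemma sum_scaledCover_le {ι : Type*} {I : Finset ι} {A B : ι → Set (Pt d)}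
    (hA : ∀ i ∈ I, Bornology.IsBounded (A i)) (hB : ∀ i ∈ I, Bornology.IsBounded (B i))
    (hAB : ∀ i ∈ I, ∀ j ∈ I, i ≠ j → ∀ x ∈ A i, ∀ y ∈ A j,
      dist x y ≤ 2 * Real.exp (-t) → x ∈ B i) :
    ∑ i ∈ I, scaledCover s (A i) t ≤
      scaledCover s (⋃ i ∈ I, A i) t + ∑ i ∈ I, scaledCover s (B i) t := by
  simp only [scaledCover, ← Finset.mul_sum, ← mul_add]
  gcongr
  exact_mod_cast sum_coveringNumber_le hA hB (Real.exp_pos _) hAB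

lemma scaledCover_le_mul_of_le_add (hA : Bornology.IsBounded A) (hs : 0 ≤ s) {t' τ : ℝ}
    (h : t ≤ t') (h' : t' ≤ t + τ) :
    scaledCover s A t ≤ Real.exp (s * τ) * scaledCover s A t' := by
  unfold scaledCover
  rw [← mul_assoc, ← Real.exp_add]
  gcongr
  · nlinarith
  · exact coveringNumber_anti hA (Real.exp_pos _) (by gcongr)

end ScaledCover

/-! ### From integrals to sums along lattices -/

lemma tsum_indicator_Ici_lt_top_of_lintegral {F : ℝ → ℝ≥0∞} {M : ℝ≥0∞} {τ : ℝ} (hτ : 0 < τ)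
    (hM : M ≠ ⊤) (hF : ∀ t t', t ≤ t' → t' ≤ t + τ → F t ≤ M * F t')
    (hint : ∫⁻ t in Ioi (0 : ℝ), F t < ⊤) (β : ℝ) :
    ∑' n : ℤ, (Ici (0 : ℝ)).indicator F (n * τ + β) < ⊤ := by
  set F₀ : ℝ → ℝ≥0∞ := (Ioi (0 : ℝ)).indicator F
  let P (n : ℤ) : Set ℝ := Ioc (β + n • τ) (β + (n + 1) • τ)
  have hcell : ∀ n : ℤ, ENNReal.ofReal τ * (Ici (0 : ℝ)).indicator F (n * τ + β) ≤
      M * ∫⁻ t in P n, F₀ t := by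
    intro n
    by_cases hn : (n * τ + β : ℝ) ∈ Ici (0 : ℝ)
    · rw [indicator_of_mem hn, ← lintegral_const_mul' M F₀ hM]
      set T := n * τ + β with hT
      have hP : P n = Ioc T (T + τ) := by
        simp only [P, hT, zsmul_eq_mul]
        push_cast
        congr 1 <;> ring
      calc ENNReal.ofReal τ * F T
          = ∫⁻ _ in P n, F T := by
            rw [setLIntegral_const, hP, Real.volume_Ioc, add_sub_cancel_left, mul_comm]
        _ ≤ ∫⁻ t in P n, M * F₀ t := by
            refine setLIntegral_mono' measurableSet_Ioc fun t ht => ?_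
            rw [hP] at ht
            simp only [F₀, indicator_of_mem (show t ∈ Ioi 0 from lt_of_le_of_lt hn ht.1)]
            exact hF T t ht.1.le ht.2
    · simp [indicator_of_notMem hn]
  have hsum : ∑' n : ℤ, ∫⁻ t in P n, F₀ t ≤ ∫⁻ t in Ioi (0 : ℝ), F t := by
    rw [← lintegral_iUnion (fun _ => measurableSet_Ioc) (pairwise_disjoint_Ioc_add_zsmul β τ),
      ← lintegral_indicator measurableSet_Ioi]
    exact setLIntegral_le_lintegral _ _
  have hmul : ENNReal.ofReal τ * ∑' n : ℤ, (Ici (0 : ℝ)).indicator F (n * τ + β) < ⊤ := by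
    rw [← ENNReal.tsum_mul_left]
    refine (ENNReal.tsum_le_tsum hcell).trans_lt ?_
    rw [ENNReal.tsum_mul_left]
    exact ENNReal.mul_lt_top hM.lt_top (hsum.trans_lt hint)
  exact ENNReal.lt_top_of_mul_ne_top_right hmul.ne (by simpa using hτ)

/-! ### Perron eigenvectors -/

section Perron

open scoped Matrix

variable {n : Type} [Fintype n] {A : Matrix n n ℝ}

lemma mulVec_mono_of_nonneg (hA : ∀ i j, 0 ≤ A i j) {x y : n → ℝ} (h : x ≤ y) :
    A *ᵥ x ≤ A *ᵥ y :=
  fun i => Finset.sum_le_sum fun j _ => mul_le_mul_of_nonneg_left (h j) (hA i j)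

lemma mulVec_pos_of_pos (hA : ∀ i j, 0 < A i j) {x : n → ℝ} (hx : 0 < x) (i : n) :
    0 < (A *ᵥ x) i := by
  obtain ⟨hx0, j, hj⟩ := Pi.lt_def.1 hx
  exact Finset.sum_pos' (fun l _ => mul_nonneg (hA i l).le (hx0 l))
    ⟨j, Finset.mem_univ j, mul_pos (hA i j) hj⟩

lemma exists_pos_commute_of_isIrreducible (hA : A.IsIrreducible) :
    ∃ P : Matrix n n ℝ, (∀ i j, 0 < P i j) ∧ Commute A P := by
  classical
  choose k _ hk using (Matrix.isIrreducible_iff_exists_pow_pos hA.nonneg).1 hA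
  obtain ⟨m, hm⟩ := (Set.finite_range fun p : n × n => k p.1 p.2).bddAbove
  refine ⟨∑ l ∈ Finset.range (m + 1), A ^ l, fun i j => ?_,
    Commute.sum_right _ _ _ fun l _ => Commute.self_pow A l⟩
  rw [Matrix.sum_apply]
  exact Finset.sum_pos' (fun l _ => Matrix.pow_apply_nonneg hA.nonneg l i j)
    ⟨k i j, Finset.mem_range.2 (Nat.lt_succ_of_le (hm ⟨(i, j), rfl⟩)), hk i j⟩

variable [DecidableEq n]

lemma pow_smul_le_pow_mulVec (hA : ∀ i j, 0 ≤ A i j) {x : n → ℝ} {c : ℝ} (hc : 0 ≤ c)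
    (h : c • x ≤ A *ᵥ x) (k : ℕ) : c ^ k • x ≤ (A ^ k) *ᵥ x := by
  induction k with
  | zero => simp
  | succ k ih =>
    calc c ^ (k + 1) • x = c ^ k • c • x := by rw [pow_succ, mul_smul]
      _ ≤ c ^ k • (A *ᵥ x) := smul_le_smul_of_nonneg_left h (by positivity)
      _ = A *ᵥ (c ^ k • x) := (Matrix.mulVec_smul A _ x).symm
      _ ≤ A *ᵥ ((A ^ k) *ᵥ x) := mulVec_mono_of_nonneg hA ih
      _ = (A ^ (k + 1)) *ᵥ x := by rw [Matrix.mulVec_mulVec, pow_succ']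

lemma finite_norm_spectrum (A : Matrix n n ℝ) :
    {x : ℝ | ∃ μ : ℂ, μ ∈ spectrum ℂ (A.map (fun a : ℝ => (a : ℂ))) ∧ x = ‖μ‖}.Finite := by
  refine ((Matrix.finite_spectrum (A.map fun a : ℝ => (a : ℂ))).image norm).subset ?_
  rintro x ⟨μ, hμ, rfl⟩
  exact mem_image_of_mem norm hμ

lemma norm_le_matrixSpectralRadius {μ : ℂ}
    (hμ : μ ∈ spectrum ℂ (A.map (fun a : ℝ => (a : ℂ)))) : ‖μ‖ ≤ matrixSpectralRadius A :=
  le_csSup (finite_norm_spectrum A).bddAbove ⟨μ, hμ, rfl⟩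

lemma exists_norm_eq_matrixSpectralRadius [Nonempty n] (A : Matrix n n ℝ) :
    ∃ μ ∈ spectrum ℂ (A.map (fun a : ℝ => (a : ℂ))), ‖μ‖ = matrixSpectralRadius A := by
  obtain ⟨ν, hν⟩ :=
    spectrum.nonempty_of_isAlgClosed_of_finiteDimensional ℂ (A.map fun a : ℝ => (a : ℂ))
  obtain ⟨μ, hμ, hnorm⟩ :=
    (finite_norm_spectrum A).isCompact.sSup_mem ⟨‖ν‖, ν, hν, rfl⟩
  exact ⟨μ, hμ, hnorm.symm⟩

lemma matrixSpectralRadius_nonneg (A : Matrix n n ℝ) : 0 ≤ matrixSpectralRadius A :=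
  Real.sSup_nonneg <| by
    rintro x ⟨μ, -, rfl⟩
    exact norm_nonneg μ

lemma ofReal_le_spectralRadius_of_pow_mul_le {R : Type*} [NormedRing R] [NormedAlgebra ℂ R]
    [CompleteSpace R] {a : R} {c δ : ℝ} (hc : 0 ≤ c) (hδ : 0 < δ)
    (h : ∀ k : ℕ, c ^ k * δ ≤ ‖a ^ k‖) : ENNReal.ofReal c ≤ spectralRadius ℂ a := by
  have hlow : Tendsto (fun k : ℕ => ENNReal.ofReal (c * δ ^ (1 / k : ℝ))) atTop
      (𝓝 (ENNReal.ofReal c)) := by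
    have hroot := ((Real.continuousAt_const_rpow hδ.ne').tendsto.comp
      tendsto_one_div_atTop_nhds_zero_nat).const_mul c
    simpa [Function.comp_def] using ENNReal.tendsto_ofReal hroot
  refine le_of_tendsto_of_tendsto hlow
    (spectrum.pow_norm_pow_one_div_tendsto_nhds_spectralRadius a) ?_
  filter_upwards [eventually_ne_atTop 0] with k hk
  refine ENNReal.ofReal_le_ofReal ?_
  calc c * δ ^ (1 / k : ℝ) = (c ^ k * δ) ^ (1 / k : ℝ) := by
        rw [Real.mul_rpow (by positivity) hδ.le, one_div, Real.pow_rpow_inv_natCast hc hk]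
    _ ≤ ‖a ^ k‖ ^ (1 / k : ℝ) := Real.rpow_le_rpow (by positivity) (h k) (by positivity)

lemma le_matrixSpectralRadius_of_smul_le (hA : ∀ i j, 0 ≤ A i j) {x : n → ℝ} (hx : 0 < x)
    {c : ℝ} (hc : 0 ≤ c) (h : c • x ≤ A *ᵥ x) : c ≤ matrixSpectralRadius A := by
  let : NormedRing (Matrix n n ℂ) := Matrix.linftyOpNormedRing
  let : NormedAlgebra ℂ (Matrix n n ℂ) := Matrix.linftyOpNormedAlgebra
  obtain ⟨i, hi⟩ : ∃ i, 0 < x i := (Pi.lt_def.1 hx).2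
  set B : Matrix n n ℂ := A.map (fun a : ℝ => (a : ℂ))
  let z : n → ℂ := fun i => (x i : ℂ)
  have hz : 0 < ‖z‖ :=
    (norm_pos_iff.2 (Complex.ofReal_ne_zero.2 hi.ne')).trans_le (norm_le_pi_norm z i)
  have hnorm (k : ℕ) : c ^ k * (x i / ‖z‖) ≤ ‖B ^ k‖ := by
    have hBk : B ^ k = (A ^ k).map (fun a : ℝ => (a : ℂ)) :=
      (Matrix.map_pow A Complex.ofRealHom k).symm
    have happly : (B ^ k *ᵥ z) i = (((A ^ k) *ᵥ x) i : ℝ) := by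
      rw [hBk]
      simp [Matrix.mulVec, dotProduct, z]
    rw [← mul_div_assoc, div_le_iff₀ hz]
    calc c ^ k * x i ≤ ((A ^ k) *ᵥ x) i := pow_smul_le_pow_mulVec hA hc h k i
      _ ≤ ‖(B ^ k *ᵥ z) i‖ := by
        rw [happly, Complex.norm_real]
        exact le_abs_self _
      _ ≤ ‖B ^ k *ᵥ z‖ := norm_le_pi_norm _ _
      _ ≤ ‖B ^ k‖ * ‖z‖ := Matrix.linfty_opNorm_mulVec _ _
  refine (ENNReal.ofReal_le_ofReal_iff (matrixSpectralRadius_nonneg A)).1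
    ((ofReal_le_spectralRadius_of_pow_mul_le hc (div_pos hi hz) hnorm).trans ?_)
  refine iSup₂_le fun μ hμ => ?_
  rw [← enorm_eq_nnnorm, ← ofReal_norm]
  exact ENNReal.ofReal_le_ofReal (norm_le_matrixSpectralRadius hμ)

lemma exists_pos_matrixSpectralRadius_smul_le [Nonempty n] (hA : ∀ i j, 0 ≤ A i j) :
    ∃ u : n → ℝ, 0 < u ∧ matrixSpectralRadius A • u ≤ A *ᵥ u := by
  obtain ⟨μ, hμ, hnorm⟩ := exists_norm_eq_matrixSpectralRadius A
  rw [← Matrix.spectrum_toLin', ← Module.End.hasEigenvalue_iff_mem_spectrum] at hμ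
  obtain ⟨w, hw⟩ := hμ.exists_hasEigenvector
  have heig : A.map (fun a : ℝ => (a : ℂ)) *ᵥ w = μ • w := by simpa using hw.apply_eq_smul
  obtain ⟨j, hj⟩ := Function.ne_iff.1 hw.2
  refine ⟨fun i => ‖w i‖, Pi.lt_def.2 ⟨fun i => norm_nonneg _, j, norm_pos_iff.2 hj⟩, fun i => ?_⟩
  calc matrixSpectralRadius A * ‖w i‖
      = ‖(A.map (fun a : ℝ => (a : ℂ)) *ᵥ w) i‖ := by simp [heig, hnorm]
    _ ≤ ∑ j, ‖A.map (fun a : ℝ => (a : ℂ)) i j * w j‖ := norm_sum_le _ _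
    _ = ∑ j, A i j * ‖w j‖ := by simp [abs_of_nonneg (hA i _)]

theorem exists_pos_mulVec_eq_matrixSpectralRadius_smul [Nonempty n] (hA : A.IsIrreducible) :
    ∃ v : n → ℝ, (∀ i, 0 < v i) ∧ A *ᵥ v = matrixSpectralRadius A • v := by
  obtain ⟨u, hu, hsub⟩ := exists_pos_matrixSpectralRadius_smul_le hA.nonneg
  obtain ⟨P, hP, hcomm⟩ := exists_pos_commute_of_isIrreducible hA
  set ρ := matrixSpectralRadius A
  have hv : ∀ i, 0 < (P *ᵥ u) i := mulVec_pos_of_pos hP hu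
  have hAv : A *ᵥ (P *ᵥ u) = P *ᵥ (A *ᵥ u) := by
    rw [Matrix.mulVec_mulVec, Matrix.mulVec_mulVec, hcomm.eq]
  refine ⟨P *ᵥ u, hv, ?_⟩
  rcases hsub.eq_or_lt with heq | hlt
  · rw [hAv, ← heq, Matrix.mulVec_smul]
  · have hgap : ∀ i, 0 < (A *ᵥ (P *ᵥ u) - ρ • (P *ᵥ u)) i := by
      rw [hAv, ← Matrix.mulVec_smul, ← Matrix.mulVec_sub]
      exact mulVec_pos_of_pos hP (sub_pos.2 hlt)
    obtain ⟨i₀, hmin⟩ := Finite.exists_min fun i =>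
      (A *ᵥ (P *ᵥ u) - ρ • (P *ᵥ u)) i / (P *ᵥ u) i
    set ε := (A *ᵥ (P *ᵥ u) - ρ • (P *ᵥ u)) i₀ / (P *ᵥ u) i₀
    have hε : 0 < ε := div_pos (hgap i₀) (hv i₀)
    have hexp : (ρ + ε) • (P *ᵥ u) ≤ A *ᵥ (P *ᵥ u) := fun i => by
      have := (le_div_iff₀ (hv i)).1 (hmin i)
      simp only [Pi.sub_apply, Pi.smul_apply, smul_eq_mul] at this ⊢
      linarith
    have hρε := le_matrixSpectralRadius_of_smul_le hA.nonneg
      (Pi.lt_def.2 ⟨fun i => (hv i).le, i₀, hv i₀⟩)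
      (add_nonneg (matrixSpectralRadius_nonneg A) hε.le) hexp
    exact absurd hρε (by linarith)

end Perron

/-! ### The renewal theorem -/

section Supersolution

lemma exists_monotone_increments {ι : Type*} {T f : ι → ℝ} (hf : ∀ p, 0 ≤ f p)
    (hs : Summable f) {a : ℝ} (ha : 0 < a) :
    ∃ (Φ : ℝ → ℝ) (M : ℝ), Monotone Φ ∧ Tendsto Φ atTop (𝓝 M) ∧
      ∀ p, f p ≤ Φ (T p) - Φ (T p - a) := by
  let S (t : ℝ) : Set ι := {p | T p ≤ t}
  have hsum (t : ℝ) : Summable ((S t).indicator f) := hs.indicator (S t)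
  let Φ (t : ℝ) : ℝ := ∑' p, (S t).indicator f p
  have hmono : Monotone Φ := fun t t' htt => (hsum t).tsum_le_tsum
    (indicator_le_indicator_of_subset (fun p hp => le_trans hp htt) hf) (hsum t')
  have hbdd : BddAbove (range Φ) := by
    refine ⟨∑' p, f p, ?_⟩
    rintro _ ⟨t, rfl⟩
    exact (hsum t).tsum_le_tsum (indicator_le_self' fun p _ => hf p) hs
  refine ⟨Φ, _, hmono, tendsto_atTop_ciSup hmono hbdd, fun p => ?_⟩
  have hsingle : Summable (({p} : Set ι).indicator f) := hs.indicator {p}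
  have hsplit : Φ (T p - a) + f p =
      ∑' p', ((S (T p - a)).indicator f p' + ({p} : Set ι).indicator f p') := by
    rw [(hsum _).tsum_add hsingle, tsum_eq_single (f := ({p} : Set ι).indicator f) p fun p' hp' =>
      indicator_of_notMem (s := {p}) hp' f, indicator_of_mem (mem_singleton p)]
  have hdisj : Disjoint (S (T p - a)) {p} :=
    disjoint_singleton_right.2 fun hp => by linarith [show T p ≤ T p - a from hp]
  have hsub : S (T p - a) ∪ {p} ⊆ S (T p) :=
    union_subset (fun p' (hp' : T p' ≤ T p - a) => hp'.trans (by linarith))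
      (singleton_subset_iff.2 (le_refl (T p)))
  have hle : Φ (T p - a) + f p ≤ Φ (T p) := by
    rw [hsplit]
    refine ((hsum _).add hsingle).tsum_le_tsum (fun p' => ?_) (hsum _)
    exact (congrFun (indicator_union_of_disjoint hdisj f) p').symm.trans_le
      (indicator_le_indicator_of_subset hsub hf p')
  linarith

lemma sub_le_of_supersolution {Ω ι : Type*} {T w : Ω → ℝ} {I : Ω → Finset ι} {q : ι → ℝ}
    {next : Ω → ι → Ω} {Φ : ℝ → ℝ} {a R T₁ c : ℝ} (ha : 0 < a) (hΦ : Monotone Φ)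
    (hq : ∀ e, 0 ≤ q e) (hq1 : ∀ x, ∑ e ∈ I x, q e = 1)
    (hnext : ∀ x, ∀ e ∈ I x, T (next x e) ∈ Icc (T x - R) (T x - a))
    (hw : ∀ x, T₁ ≤ T x → ∑ e ∈ I x, q e * w (next x e) - (Φ (T x) - Φ (T x - a)) ≤ w x)
    (hc : ∀ x, T x ∈ Ico (T₁ - R) T₁ → c ≤ w x) {x : Ω} (hx : T₁ - R ≤ T x) :
    c - (Φ (T x) - Φ (T₁ - R)) ≤ w x := by
  have key : ∀ m : ℕ, ∀ x, T₁ - R ≤ T x → T x < T₁ + m * a →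
      c - (Φ (T x) - Φ (T₁ - R)) ≤ w x := by
    intro m
    induction m with
    | zero =>
      intro x h h'
      linarith [hc x ⟨h, by simpa using h'⟩, hΦ h]
    | succ m ih =>
      intro x h h'
      push_cast at h'
      rcases lt_or_ge (T x) T₁ with hlt | hge
      · linarith [hc x ⟨h, hlt⟩, hΦ h]
      have hstep : ∀ e ∈ I x, c - (Φ (T x - a) - Φ (T₁ - R)) ≤ w (next x e) := fun e he => by
        obtain ⟨hR, ha⟩ := hnext x e he
        linarith [ih (next x e) (by linarith) (by linarith), hΦ ha]
      have hmean : c - (Φ (T x - a) - Φ (T₁ - R)) ≤ ∑ e ∈ I x, q e * w (next x e) :=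
        calc c - (Φ (T x - a) - Φ (T₁ - R))
            = ∑ e ∈ I x, q e * (c - (Φ (T x - a) - Φ (T₁ - R))) := by
              rw [← Finset.sum_mul, hq1, one_mul]
          _ ≤ _ := Finset.sum_le_sum fun e he => mul_le_mul_of_nonneg_left (hstep e he) (hq e)
      linarith [hw x hge]
  obtain ⟨m, hm⟩ := exists_nat_gt ((T x - T₁) / a)
  rw [div_lt_iff₀ ha] at hm
  exact key m x hx (by linarith)

end Supersolution

section ClusterPoint

variable {α : Type*} {l : Filter α} {x y : ℝ}

lemma exists_greatest_mapClusterPt {ι : Type*} [Finite ι] [Nonempty ι] [l.NeBot] {f : ι → α → ℝ}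
    (hf : ∀ i, ∀ᶠ n in l, f i n ∈ Icc x y) :
    ∃ Λ, (∃ i, MapClusterPt Λ l (f i)) ∧ ∀ i z, MapClusterPt z l (f i) → z ≤ Λ := by
  have hcompact : IsCompact (⋃ i, {z | MapClusterPt z l (f i)}) := isCompact_iUnion fun i =>
    isCompact_Icc.of_isClosed_subset isClosed_setOfPred_clusterPt fun z hz =>
      isClosed_Icc.mem_of_mapClusterPt hz (hf i)
  have hne : (⋃ i, {z | MapClusterPt z l (f i)}).Nonempty := by
    inhabit ι
    obtain ⟨z, -, hz⟩ := isCompact_Icc.exists_mapClusterPt_of_frequently (hf default).frequently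
    exact ⟨z, mem_iUnion.2 ⟨default, hz⟩⟩
  obtain ⟨Λ, hΛ, hgreatest⟩ := hcompact.exists_isGreatest hne
  exact ⟨Λ, mem_iUnion.1 hΛ, fun i z hz => hgreatest (mem_iUnion.2 ⟨i, hz⟩)⟩

lemma eventually_lt_of_mapClusterPt_le {f : α → ℝ} {Λ z : ℝ} (hf : ∀ᶠ n in l, f n ≤ y)
    (hΛ : ∀ x, MapClusterPt x l f → x ≤ Λ) (hz : Λ < z) : ∀ᶠ n in l, f n < z := by
  by_contra hcon
  rw [not_eventually] at hcon
  have hfreq : ∃ᶠ n in l, f n ∈ Icc z y :=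
    (hcon.and_eventually hf).mono fun n h => ⟨not_lt.1 h.1, h.2⟩
  obtain ⟨x, hx, hxc⟩ := isCompact_Icc.exists_mapClusterPt_of_frequently hfreq
  exact absurd (hΛ x hxc) (not_le.2 (hz.trans_le hx.1))

end ClusterPoint

/-- A Markov chain on `V × ℤ` that is invariant under translations of `ℤ`: from `(init e, n)` it
moves along the edge `e` to `(term e, n - step e)` with probability `prob e`. The state `(i, n)`
has the real time `n * span + pot i`, and every transition strictly decreases the time. -/
structure LatticeWalk (V E : Type*) [Fintype E] [DecidableEq V] where
  init : E → V
  term : E → V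
  prob : E → ℝ
  step : E → ℤ
  span : ℝ
  pot : V → ℝ
  span_pos : 0 < span
  prob_pos : ∀ e, 0 < prob e
  sum_prob : ∀ i, ∑ e with init e = i, prob e = 1
  drop_pos : ∀ e, 0 < step e * span + pot (init e) - pot (term e)

namespace LatticeWalk

variable {V E : Type*} [Fintype E] [DecidableEq V] (W : LatticeWalk V E)

/-- The real time of a state. -/
def time (p : V × ℤ) : ℝ := p.2 * W.span + W.pot p.1

/-- The state reached from `p` along the edge `e`, which should start at `p.1`. -/
def next (p : V × ℤ) (e : E) : V × ℤ := (W.term e, p.2 - W.step e)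

/-- The expectation of `w` after one transition from `p`. -/
def mean (w : V × ℤ → ℝ) (p : V × ℤ) : ℝ := ∑ e with W.init e = p.1, W.prob e * w (W.next p e)

/-- The failure of `w` to be harmonic at `p`. -/
def defect (w : V × ℤ → ℝ) (p : V × ℤ) : ℝ := w p - W.mean w p

/-- Irreducibility and aperiodicity: every non-empty set of states that is closed under
transitions contains all states in the distant past. -/
def IsIrreducibleAperiodic : Prop :=
  ∀ Z : Set (V × ℤ), Z.Nonempty → (∀ e n, (W.init e, n) ∈ Z → W.next (W.init e, n) e ∈ Z) →
    ∃ m : ℤ, ∀ i, ∀ n ≤ m, (i, n) ∈ Z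

variable {W}

lemma time_add (i : V) (n l : ℤ) : W.time (i, n + l) = n * W.span + W.time (i, l) := by
  simp only [time]
  push_cast
  ring

lemma exists_time_next_mem :
    ∃ a R, 0 < a ∧ ∀ (p : V × ℤ) (e : E), W.init e = p.1 →
      W.time (W.next p e) ∈ Icc (W.time p - R) (W.time p - a) := by
  let drop (e : E) : ℝ := W.step e * W.span + W.pot (W.init e) - W.pot (W.term e)
  obtain ⟨R, hR⟩ := (Set.finite_range drop).bddAbove
  obtain ⟨a, ha, hadrop⟩ : ∃ a > 0, ∀ e, a ≤ drop e := by
    rcases isEmpty_or_nonempty E with hE | hE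
    · exact ⟨1, one_pos, fun e => hE.elim e⟩
    · obtain ⟨e₀, he₀⟩ := Finite.exists_min drop
      exact ⟨drop e₀, W.drop_pos e₀, he₀⟩
  refine ⟨a, R, ha, fun p e he => ?_⟩
  have htime : W.time (W.next p e) = W.time p - drop e := by
    simp only [time, next, drop, he]
    push_cast
    ring
  rw [htime]
  exact ⟨sub_le_sub_left (hR (mem_range_self e)) _, sub_le_sub_left (hadrop e) _⟩

lemma tendsto_time (i : V) : Tendsto (fun n : ℤ => W.time (i, n)) atTop atTop :=
  tendsto_atTop_add_const_right _ (W.pot i)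
    (tendsto_intCast_atTop_atTop.atTop_mul_const W.span_pos)

lemma finite_time_mem_Icc [Finite V] (x y : ℝ) : {p | W.time p ∈ Icc x y}.Finite := by
  have hfiber (i : V) : {n : ℤ | W.time (i, n) ∈ Icc x y}.Finite := by
    refine (Set.finite_Icc ⌊(x - W.pot i) / W.span⌋ ⌈(y - W.pot i) / W.span⌉).subset ?_
    rintro n ⟨hx, hy⟩
    simp only [time] at hx hy
    constructor
    · refine Int.cast_le.1 ((Int.floor_le _).trans ?_ : (_ : ℝ) ≤ n)
      rw [div_le_iff₀ W.span_pos]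
      linarith
    · refine Int.cast_le.1 (le_trans ?_ (Int.le_ceil _) : (n : ℝ) ≤ _)
      rw [le_div_iff₀ W.span_pos]
      linarith
  refine (Set.finite_iUnion fun i => (hfiber i).image (Prod.mk i)).subset fun p hp => ?_
  exact mem_iUnion.2 ⟨p.1, p.2, hp, rfl⟩

lemma defect_neg (w : V × ℤ → ℝ) (p : V × ℤ) : W.defect (-w) p = -W.defect w p := by
  simp only [defect, mean, Pi.neg_apply, mul_neg, Finset.sum_neg_distrib]
  ring

variable {w : V × ℤ → ℝ} {T₀ : ℝ}

lemma exists_lower_bound_propagation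
    (hw : Summable ({p | T₀ ≤ W.time p}.indicator fun p => |W.defect w p|)) :
    ∃ (R : ℝ) (ε : ℝ → ℝ), Tendsto ε atTop (𝓝 0) ∧ ∀ T₁ ≥ T₀, ∀ c,
      (∀ p, W.time p ∈ Ico (T₁ - R) T₁ → c ≤ w p) → ∀ p, T₁ - R ≤ W.time p → c - ε T₁ ≤ w p := by
  obtain ⟨a, R, ha, hnext⟩ := W.exists_time_next_mem
  obtain ⟨Φ, M, hΦ, hΦM, hinc⟩ :=
    exists_monotone_increments (T := W.time) (indicator_nonneg fun p _ => abs_nonneg _) hw ha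
  refine ⟨R, fun T₁ => M - Φ (T₁ - R), ?_, fun T₁ hT₁ c hc p hp => ?_⟩
  · simpa [Function.comp_def, sub_eq_add_neg] using
      (hΦM.comp (tendsto_atTop_add_const_right _ (-R) tendsto_id)).const_sub M
  · have hsup : ∀ p, T₁ ≤ W.time p → ∑ e with W.init e = p.1, W.prob e * w (W.next p e) -
        (Φ (W.time p) - Φ (W.time p - a)) ≤ w p := by
      intro p hp
      have hdefect := hinc p
      rw [indicator_of_mem (show p ∈ {p | T₀ ≤ W.time p} from hT₁.trans hp)] at hdefect
      have : W.mean w p + W.defect w p = w p := add_sub_cancel _ _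
      unfold mean at this
      linarith [neg_abs_le (W.defect w p)]
    have := sub_le_of_supersolution ha hΦ (fun e => (W.prob_pos e).le) (fun p => W.sum_prob p.1)
      (fun p e he => hnext p e (Finset.mem_filter.1 he).2) hsup hc hp
    linarith [hΦ.ge_of_tendsto hΦM (W.time p)]

lemma exists_eventually_ge [Finite V]
    (hw : Summable ({p | T₀ ≤ W.time p}.indicator fun p => |W.defect w p|)) :
    ∃ D, ∀ i, ∀ᶠ n in atTop, D ≤ w (i, n) := by
  obtain ⟨R, ε, -, hprop⟩ := exists_lower_bound_propagation hw
  obtain ⟨c, hc⟩ := ((W.finite_time_mem_Icc (T₀ - R) T₀).image w).bddBelow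
  refine ⟨c - ε T₀, fun i => ?_⟩
  filter_upwards [(W.tendsto_time i).eventually_ge_atTop (T₀ - R)] with n hn
  exact hprop T₀ le_rfl c
    (fun p hp => hc (mem_image_of_mem w (Ico_subset_Icc_self hp : W.time p ∈ _))) _ hn

lemma exists_eventually_mem_Icc [Finite V]
    (hw : Summable ({p | T₀ ≤ W.time p}.indicator fun p => |W.defect w p|)) :
    ∃ x y, ∀ i, ∀ᶠ n in atTop, w (i, n) ∈ Icc x y := by
  obtain ⟨x, hx⟩ := exists_eventually_ge hw
  obtain ⟨y, hy⟩ := exists_eventually_ge (W := W) (w := -w) (T₀ := T₀) (by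
    simpa only [defect_neg, abs_neg] using hw)
  refine ⟨x, -y, fun i => ?_⟩
  filter_upwards [hx i, hy i] with n hnx hny
  exact ⟨hnx, le_neg_of_le_neg hny⟩

lemma tendsto_defect
    (hw : Summable ({p | T₀ ≤ W.time p}.indicator fun p => |W.defect w p|)) (i : V) :
    Tendsto (fun n => W.defect w (i, n)) atTop (𝓝 0) := by
  have hlim := (hw.comp_injective (Prod.mk_right_injective i)).tendsto_cofinite_zero.mono_left
    (atTop_le_cofinite (α := ℤ))
  rw [tendsto_zero_iff_abs_tendsto_zero]
  refine hlim.congr' ?_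
  filter_upwards [(W.tendsto_time i).eventually_ge_atTop T₀] with n hn
  exact indicator_of_mem (show (i, n) ∈ {p | T₀ ≤ W.time p} from hn) _

lemma exists_harmonic_translate_limit {x y : ℝ} (hbd : ∀ i, ∀ᶠ n in atTop, w (i, n) ∈ Icc x y)
    (hdef : ∀ i, Tendsto (fun n => W.defect w (i, n)) atTop (𝓝 0)) {F : Ultrafilter ℤ}
    (hF : ↑F ≤ (atTop : Filter ℤ)) :
    ∃ ω : V × ℤ → ℝ, (∀ p, ω p = W.mean ω p) ∧
      ∀ i l, Tendsto (fun n => w (i, n + l)) F (𝓝 (ω (i, l))) := by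
  have hshift (l : ℤ) : Tendsto (fun n : ℤ => n + l) F atTop :=
    (tendsto_atTop_add_const_right _ l tendsto_id).mono_left hF
  have hlim (p : V × ℤ) : ∃ z, Tendsto (fun n => w (p.1, n + p.2)) F (𝓝 z) := by
    obtain ⟨z, -, hz⟩ := isCompact_Icc.ultrafilter_le_nhds' (F.map fun n => w (p.1, n + p.2))
      ((hshift p.2).eventually (hbd p.1))
    exact ⟨z, hz⟩
  choose ω hω using hlim
  refine ⟨ω, fun p => ?_, fun i l => hω (i, l)⟩
  have hmean : Tendsto (fun n => W.mean w (p.1, n + p.2)) F (𝓝 (W.mean ω p)) := by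
    refine tendsto_finsetSum _ fun e _ => Tendsto.const_mul (W.prob e) ?_
    simpa only [next, add_sub_assoc] using hω (W.next p e)
  have hsum := hmean.add ((hdef p.1).comp (hshift p.2))
  simp only [Function.comp_def, defect, add_sub_cancel, add_zero] at hsum
  exact tendsto_nhds_unique (hω p) hsum

lemma IsIrreducibleAperiodic.eq_of_harmonic_of_le (hW : W.IsIrreducibleAperiodic)
    {ω : V × ℤ → ℝ} (hω : ∀ p, ω p = W.mean ω p) {Λ : ℝ} (hle : ∀ p, ω p ≤ Λ) {p₀ : V × ℤ}
    (hp₀ : ω p₀ = Λ) : ∃ m : ℤ, ∀ i, ∀ n ≤ m, ω (i, n) = Λ := by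
  refine hW {p | ω p = Λ} ⟨p₀, hp₀⟩ fun e n he => ?_
  have hsum : ∑ e' with W.init e' = W.init e,
      W.prob e' * (Λ - ω (W.next (W.init e, n) e')) = 0 := by
    have := hω (W.init e, n)
    simp only [mean] at this
    simp only [mul_sub, Finset.sum_sub_distrib, ← Finset.sum_mul, W.sum_prob, ← this,
      show ω (W.init e, n) = Λ from he]
    ring
  have hzero := (Finset.sum_eq_zero_iff_of_nonneg fun e' _ =>
    mul_nonneg (W.prob_pos e').le (sub_nonneg.2 (hle _))).1 hsum e (by simp)
  exact (sub_eq_zero.1 ((mul_eq_zero.1 hzero).resolve_left (W.prob_pos e).ne')).symm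

lemma eventually_gt_of_translate_limit [Finite V]
    (hw : Summable ({p | T₀ ≤ W.time p}.indicator fun p => |W.defect w p|)) {F : Ultrafilter ℤ}
    (hF : ↑F ≤ (atTop : Filter ℤ)) {Λ : ℝ} {m : ℤ}
    (hlim : ∀ i, ∀ l ≤ m, Tendsto (fun n => w (i, n + l)) F (𝓝 Λ)) {x : ℝ} (hx : x < Λ) (i : V) :
    ∀ᶠ n in atTop, x < w (i, n) := by
  obtain ⟨R, ε, hε, hprop⟩ := exists_lower_bound_propagation hw
  obtain ⟨T, hT⟩ : ∃ T, ∀ p, W.time p < T → p.2 ≤ m := by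
    obtain ⟨T, hT⟩ := (Set.finite_range fun j => W.time (j, m)).bddBelow
    refine ⟨T, fun p hp => Int.cast_le.1 (le_of_mul_le_mul_right ?_ W.span_pos : (p.2 : ℝ) ≤ m)⟩
    have hTp : T ≤ W.time (p.1, m) := hT (mem_range_self p.1)
    simp only [time] at hp hTp
    linarith
  have hwindow : ∀ᶠ n in (F : Filter ℤ), ∀ p, W.time p ∈ Ico (T - R) T →
      (x + Λ) / 2 < w (p.1, n + p.2) :=
    (((W.finite_time_mem_Icc (T - R) T).subset fun p hp =>
      Ico_subset_Icc_self hp).eventually_all (l := (F : Filter ℤ))).2 fun p hp =>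
        (hlim p.1 p.2 (hT p hp.2)).eventually_const_lt (by linarith)
  have hT₁ : Tendsto (fun n : ℤ => n * W.span + T) F atTop :=
    (tendsto_atTop_add_const_right _ T
      (tendsto_intCast_atTop_atTop.atTop_mul_const W.span_pos)).mono_left hF
  obtain ⟨n, hn, hn₀, hnε⟩ := (hwindow.and ((hT₁.eventually_ge_atTop T₀).and
    ((hε.comp hT₁).eventually_lt_const (u := (Λ - x) / 2) (by linarith)))).exists
  have hlow := hprop _ hn₀ ((x + Λ) / 2) fun p hp => by
    have htime : W.time p = n * W.span + W.time (p.1, p.2 - n) := by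
      rw [← time_add, add_sub_cancel]
    rw [htime] at hp
    have := hn (p.1, p.2 - n) ⟨by linarith [hp.1], by linarith [hp.2]⟩
    rw [add_sub_cancel] at this
    exact this.le
  filter_upwards [(W.tendsto_time i).eventually_ge_atTop (n * W.span + T - R)] with n' hn'
  have := hlow (i, n') hn'
  simp only [Function.comp_apply] at hnε
  linarith

/- The largest cluster point `Λ` of `w` is attained by a translate limit `ω` of `w`, which is
harmonic; by the maximum principle `ω = Λ` in the distant past, so `w` is close to `Λ` on a whole
window of late times, and this lower bound propagates to all later times. -/
theorem exists_tendsto_of_summable_defect [Finite V] [Nonempty V] (hW : W.IsIrreducibleAperiodic)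
    (hw : Summable ({p | T₀ ≤ W.time p}.indicator fun p => |W.defect w p|)) :
    ∃ L, ∀ i, Tendsto (fun n => w (i, n)) atTop (𝓝 L) := by
  obtain ⟨x, y, hbd⟩ := exists_eventually_mem_Icc hw
  obtain ⟨Λ, ⟨i₀, hi₀⟩, hmax⟩ := exists_greatest_mapClusterPt hbd
  obtain ⟨F, hF, hFΛ⟩ := mapClusterPt_iff_ultrafilter.1 hi₀
  obtain ⟨ω, hharm, hω⟩ := exists_harmonic_translate_limit hbd (tendsto_defect hw) hF
  have hωle (p : V × ℤ) : ω p ≤ Λ := hmax p.1 _ <| mapClusterPt_iff_ultrafilter.2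
    ⟨F.map fun n => n + p.2, (tendsto_atTop_add_const_right _ _ tendsto_id).mono_left hF,
      hω p.1 p.2⟩
  have hω₀ : ω (i₀, 0) = Λ := tendsto_nhds_unique (by simpa using hω i₀ 0) hFΛ
  obtain ⟨m, hm⟩ := hW.eq_of_harmonic_of_le hharm hωle hω₀
  have hlim (i : V) (l : ℤ) (hl : l ≤ m) : Tendsto (fun n => w (i, n + l)) F (𝓝 Λ) :=
    hm i l hl ▸ hω i l
  exact ⟨Λ, fun i => tendsto_order.2
    ⟨fun z hz => eventually_gt_of_translate_limit hw hF hlim hz i,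
      fun z hz => eventually_lt_of_mapClusterPt_le ((hbd i).mono fun n hn => hn.2) (hmax i) hz⟩⟩

end LatticeWalk

/-! ### Mauldin–Williams graphs -/

namespace MWGraph

section Edges

variable {d : ℕ} {V E : Type} [Fintype V] [Fintype E] (G : MWGraph d V E) (e : E)

/-- The logarithmic length `-log r_e` of an edge. -/
def len : ℝ := -Real.log (G.r e)

lemma len_pos : 0 < G.len e := neg_pos.2 (Real.log_neg (G.r_pos e) (G.r_lt_one e))

lemma exp_neg_len : Real.exp (-G.len e) = G.r e := by
  rw [len, neg_neg, Real.exp_log (G.r_pos e)]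

lemma exp_neg_eq_r_mul (t : ℝ) : Real.exp (-t) = G.r e * Real.exp (-(t - G.len e)) := by
  rw [← G.exp_neg_len, ← Real.exp_add]
  congr 1
  ring

lemma r_rpow (s : ℝ) : G.r e ^ s = Real.exp (-s * G.len e) := by
  rw [Real.rpow_def_of_pos (G.r_pos e), len]
  congr 1
  ring

lemma r_rpow_pos (s : ℝ) : 0 < G.r e ^ s := Real.rpow_pos_of_pos (G.r_pos e) s

lemma exists_len_mem_Icc : ∃ a R, 0 < a ∧ ∀ e, G.len e ∈ Icc a R := by
  obtain ⟨R, hR⟩ := (Set.finite_range G.len).bddAbove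
  obtain ⟨a, ha, hlen⟩ : ∃ a > 0, ∀ e, a ≤ G.len e := by
    rcases isEmpty_or_nonempty E with hE | hE
    · exact ⟨1, one_pos, fun e => hE.elim e⟩
    · obtain ⟨e₀, he₀⟩ := Finite.exists_min G.len
      exact ⟨G.len e₀, G.len_pos e₀, he₀⟩
  exact ⟨a, R, ha, fun e => ⟨hlen e, hR (mem_range_self e)⟩⟩

lemma exists_r_le : ∃ ρ, 0 ≤ ρ ∧ ρ < 1 ∧ ∀ e, G.r e ≤ ρ := by
  obtain ⟨a, _, ha, hlen⟩ := G.exists_len_mem_Icc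
  refine ⟨Real.exp (-a), (Real.exp_pos _).le, Real.exp_lt_one_iff.2 (neg_neg_of_pos ha),
    fun e => ?_⟩
  rw [← G.exp_neg_len]
  gcongr
  exact (hlen e).1

/-- The edge map `S_e` as a bundled dilation. -/
def dilation : Pt d →ᵈ Pt d :=
  Dilation.mkOfDistEq (G.S e) ⟨⟨G.r e, (G.r_pos e).le⟩, fun h => (G.r_pos e).ne' congr($h.1),
    G.S_sim e⟩

lemma S_injective : Function.Injective (G.S e) := Dilation.injective (G.dilation e)

lemma S_continuous : Continuous (G.S e) := Dilation.toContinuous (G.dilation e)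

lemma S_surjective : Function.Surjective (G.S e) :=
  surjective_of_dist_eq_mul (G.r_pos e) (G.S_sim e)

lemma S_isOpenMap : IsOpenMap (G.S e) :=
  ((Dilation.isEmbedding (G.dilation e)).toHomeomorphOfSurjective (G.S_surjective e)).isOpenMap

variable {G e}

lemma image_closedBall (x : Pt d) (c t : ℝ) :
    G.S e '' closedBall x (c * Real.exp (-(t - G.len e))) =
      closedBall (G.S e x) (c * Real.exp (-t)) := by
  rw [image_closedBall_of_dist_eq_mul (G.r_pos e) (G.S_sim e) (G.S_surjective e),
    G.exp_neg_eq_r_mul e t, mul_left_comm]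

lemma isBounded_image {A : Set (Pt d)} (hA : Bornology.IsBounded A) :
    Bornology.IsBounded (G.S e '' A) :=
  isBounded_image_of_dist_eq_mul (G.S_sim e) hA

lemma scaledCover_image {A : Set (Pt d)} (hA : Bornology.IsBounded A) (s t : ℝ) :
    scaledCover s (G.S e '' A) t = G.r e ^ s * scaledCover s A (t - G.len e) := by
  simp only [scaledCover, G.r_rpow, G.exp_neg_eq_r_mul e t,
    coveringNumber_image (G.r_pos e) (G.S_sim e) hA (Real.exp_pos _)]
  rw [← mul_assoc, ← Real.exp_add]
  congr 2
  ring

end Edges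

section Paths

variable {d : ℕ} {V E : Type} [Fintype V] [Fintype E] {G : MWGraph d V E}

variable (G) in
/-- `G.IsPathBetween i j γ` holds iff `γ` is a directed path from `i` to `j`. -/
def IsPathBetween (i j : V) (γ : List E) : Prop := G.IsPathFrom i γ ∧ G.pathTerm i γ = j

lemma StronglyConnected.exists_path (hSC : G.StronglyConnected) (i j : V) :
    ∃ γ, G.IsPathBetween i j γ :=
  let ⟨γ, _, hγ⟩ := hSC i j
  ⟨γ, hγ⟩

lemma isPathBetween_nil {i j : V} : G.IsPathBetween i j [] ↔ i = j := by
  simp [IsPathBetween, IsPathFrom, pathTerm]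

lemma isPathBetween_cons {i j : V} {e : E} {γ : List E} :
    G.IsPathBetween i j (e :: γ) ↔ G.init e = i ∧ G.IsPathBetween (G.term e) j γ :=
  and_assoc

lemma IsPathBetween.append {i j k : V} {γ η : List E} (hγ : G.IsPathBetween i j γ)
    (hη : G.IsPathBetween j k η) : G.IsPathBetween i k (γ ++ η) := by
  induction γ generalizing i with
  | nil => rwa [isPathBetween_nil.1 hγ]
  | cons e es ih =>
    obtain ⟨rfl, hes⟩ := isPathBetween_cons.1 hγ
    exact isPathBetween_cons.2 ⟨rfl, ih hes⟩

lemma neg_log_pathRatio (γ : List E) : -Real.log (G.pathRatio γ) = (γ.map G.len).sum := by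
  induction γ with
  | nil => simp [pathRatio]
  | cons e es ih =>
    have hes : (es.map G.r).prod ≠ 0 := List.prod_ne_zero fun h =>
      have ⟨e, _, he⟩ := List.mem_map.1 h
      (G.r_pos e).ne' he
    rw [pathRatio] at ih ⊢
    rw [List.map_cons, List.prod_cons, Real.log_mul (G.r_pos e).ne' hes, neg_add, ih]
    rfl

lemma len_sum_mem_GM {i : V} {γ : List E} (hγ : G.IsPathBetween i i γ) :
    (γ.map G.len).sum ∈ G.GM := by
  refine subset_closure ?_
  rcases eq_or_ne γ [] with rfl | hne
  · simp [zero_mem]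
  · rw [← neg_log_pathRatio]
    exact AddSubgroup.subset_closure ⟨i, γ, hne, hγ.1, hγ.2, rfl⟩

end Paths

section Perron

variable {d : ℕ} {V E : Type} [Fintype V] [Fintype E] {G : MWGraph d V E} {s : ℝ}

variable (G) in
/-- `v` is a positive eigenvector of `A_G^s` with eigenvalue `1`. The identity
`∑ r_e^s v(term e) = v i` makes the numbers `r_e^s v(term e) / v i` transition probabilities. -/
def IsPerronVector [DecidableEq V] (s : ℝ) (v : V → ℝ) : Prop :=
  (∀ i, 0 < v i) ∧ ∀ i, ∑ e with G.init e = i, G.r e ^ s * v (G.term e) = v i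

variable [DecidableEq V]

lemma Amatrix_nonneg (i j : V) : 0 ≤ G.Amatrix s i j := by
  refine Finset.sum_nonneg fun e _ => ?_
  split_ifs
  · exact (G.r_rpow_pos e s).le
  · exact le_rfl

lemma Amatrix_init_term_pos (e : E) : 0 < G.Amatrix s (G.init e) (G.term e) := by
  refine Finset.sum_pos' (fun e' _ => ?_) ⟨e, Finset.mem_univ e, ?_⟩
  · split_ifs
    · exact (G.r_rpow_pos e' s).le
    · exact le_rfl
  · simpa using G.r_rpow_pos e s

lemma IsPathBetween.Amatrix_pow_pos {i j : V} {γ : List E} (hγ : G.IsPathBetween i j γ) :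
    0 < (G.Amatrix s ^ γ.length) i j := by
  induction γ generalizing i with
  | nil => simp [isPathBetween_nil.1 hγ]
  | cons e es ih =>
    obtain ⟨rfl, hes⟩ := isPathBetween_cons.1 hγ
    rw [List.length_cons, pow_succ', Matrix.mul_apply]
    exact Finset.sum_pos' (fun l _ => mul_nonneg (Amatrix_nonneg _ l)
      (Matrix.pow_apply_nonneg Amatrix_nonneg _ _ _))
      ⟨G.term e, Finset.mem_univ _, mul_pos (Amatrix_init_term_pos e) (ih hes)⟩

lemma StronglyConnected.isIrreducible_Amatrix (hSC : G.StronglyConnected) :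
    (G.Amatrix s).IsIrreducible :=
  (Matrix.isIrreducible_iff_exists_pow_pos Amatrix_nonneg).2 fun i j =>
    have ⟨γ, hne, hγ⟩ := hSC i j
    ⟨γ.length, List.length_pos_iff.2 hne, IsPathBetween.Amatrix_pow_pos hγ⟩

lemma exists_isPerronVector [Nonempty V] (hSC : G.StronglyConnected)
    (hs : matrixSpectralRadius (G.Amatrix s) = 1) : ∃ v, G.IsPerronVector s v := by
  obtain ⟨v, hv, hfix⟩ := exists_pos_mulVec_eq_matrixSpectralRadius_smul
    (hSC.isIrreducible_Amatrix (s := s))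
  refine ⟨v, hv, fun i => ?_⟩
  have hi := congrFun hfix i
  rw [hs, one_smul] at hi
  rw [← hi]
  simp only [Matrix.mulVec, dotProduct, Amatrix, Matrix.of_apply, Finset.sum_mul, ite_mul,
    zero_mul, ite_and]
  rw [Finset.sum_comm, Finset.sum_filter]
  refine Finset.sum_congr rfl fun e _ => ?_
  split_ifs <;> simp

end Perron

end MWGraph

/-- Up to the vertex potential `pot`, every edge `e` of `G` has length `step e * τ`, so that the
times `n * τ + pot i` at the vertices `i` are respected by the edges. -/
structure LatticePotential {d : ℕ} {V E : Type} [Fintype V] [Fintype E] (G : MWGraph d V E)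
    (τ : ℝ) where
  pot : V → ℝ
  step : E → ℤ
  step_mul : ∀ e, step e * τ = G.len e - pot (G.init e) + pot (G.term e)

namespace LatticePotential

variable {d : ℕ} {V E : Type} [Fintype V] [Fintype E] {G : MWGraph d V E} {τ : ℝ}

/-- The potential `P` raised by the constant `y`. -/
def shift (P : LatticePotential G τ) (y : ℝ) : LatticePotential G τ where
  pot i := P.pot i + y
  step := P.step
  step_mul e := by
    rw [P.step_mul]
    ring

lemma nonempty_of_GM (hSC : G.StronglyConnected) (hGM : G.GM = {x : ℝ | ∃ n : ℤ, x = n * τ}) :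
    Nonempty (LatticePotential G τ) := by
  rcases isEmpty_or_nonempty V with hV | ⟨⟨o⟩⟩
  · exact ⟨⟨fun _ => 0, fun _ => 0, fun e => hV.elim (G.init e)⟩⟩
  choose γ hγ using fun i => hSC.exists_path i o
  have hcycle {i : V} {η : List E} (hη : G.IsPathBetween i i η) :
      ∃ n : ℤ, (η.map G.len).sum = n * τ := by
    have := G.len_sum_mem_GM hη
    rwa [hGM] at this
  have hstep (e : E) : ∃ n : ℤ, (n : ℝ) * τ = G.len e - ((γ (G.init e)).map G.len).sum +
      ((γ (G.term e)).map G.len).sum := by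
    obtain ⟨η, hη⟩ := hSC.exists_path o (G.init e)
    obtain ⟨n₁, h₁⟩ := hcycle ((hγ (G.init e)).append hη)
    obtain ⟨n₂, h₂⟩ :=
      hcycle (G.isPathBetween_cons.2 ⟨rfl, (hγ (G.term e)).append hη⟩)
    refine ⟨n₂ - n₁, ?_⟩
    push_cast
    rw [sub_mul, ← h₁, ← h₂]
    simp only [List.map_cons, List.map_append, List.sum_cons, List.sum_append]
    ring
  choose step hstep using hstep
  exact ⟨⟨fun i => ((γ i).map G.len).sum, step, hstep⟩⟩

variable (P : LatticePotential G τ)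

lemma sum_step_mul {i j : V} {γ : List E} (hγ : G.IsPathBetween i j γ) :
    ((γ.map P.step).sum : ℝ) * τ = (γ.map G.len).sum - P.pot i + P.pot j := by
  induction γ generalizing i with
  | nil => simp [G.isPathBetween_nil.1 hγ]
  | cons e es ih =>
    obtain ⟨rfl, hes⟩ := G.isPathBetween_cons.1 hγ
    rw [List.map_cons, List.sum_cons, Int.cast_add, add_mul, P.step_mul, ih hes]
    simp only [List.map_cons, List.sum_cons]
    ring

lemma sum_step_nonneg (hτ : 0 < τ) {i : V} {γ : List E} (hγ : G.IsPathBetween i i γ) :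
    0 ≤ (γ.map P.step).sum := by
  have hlen : 0 ≤ (γ.map G.len).sum := List.sum_nonneg fun x hx =>
    have ⟨e, _, he⟩ := List.mem_map.1 hx
    he ▸ (G.len_pos e).le
  have hsum := P.sum_step_mul hγ
  rw [sub_add_cancel] at hsum
  rw [← hsum] at hlen
  exact_mod_cast nonneg_of_mul_nonneg_left hlen hτ

/-- The return times to `i`, in units of `τ`. -/
def returnTimes (i : V) : Set ℕ := {m | ∃ γ, G.IsPathBetween i i γ ∧ (γ.map P.step).sum = m}

lemma setGcd_returnTimes_dvd (hSC : G.StronglyConnected) (hτ : 0 < τ) (i : V) {j : V}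
    {γ : List E} (hγ : G.IsPathBetween j j γ) :
    (Nat.setGcd (P.returnTimes i) : ℤ) ∣ (γ.map P.step).sum := by
  have hreturn {η : List E} (hη : G.IsPathBetween i i η) :
      (Nat.setGcd (P.returnTimes i) : ℤ) ∣ (η.map P.step).sum := by
    obtain ⟨m, hm⟩ := Int.eq_ofNat_of_zero_le (P.sum_step_nonneg hτ hη)
    rw [hm]
    exact Int.natCast_dvd_natCast.2 (Nat.setGcd_dvd_of_mem ⟨η, hη, hm⟩)
  obtain ⟨α, hα⟩ := hSC.exists_path i j
  obtain ⟨β, hβ⟩ := hSC.exists_path j i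
  simpa using dvd_sub (hreturn (hα.append (hγ.append hβ))) (hreturn (hα.append hβ))

lemma setGcd_returnTimes (hSC : G.StronglyConnected) (hτ : 0 < τ) (hGM : τ ∈ G.GM) (i : V) :
    Nat.setGcd (P.returnTimes i) = 1 := by
  let H : AddSubgroup ℝ := AddSubgroup.zmultiples (Nat.setGcd (P.returnTimes i) * τ)
  have hle : AddSubgroup.closure G.cycleSet ≤ H := by
    refine (AddSubgroup.closure_le _).2 ?_
    rintro _ ⟨j, γ, -, hp, ht, rfl⟩
    obtain ⟨c, hc⟩ := P.setGcd_returnTimes_dvd hSC hτ i ⟨hp, ht⟩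
    refine AddSubgroup.mem_zmultiples_iff.2 ⟨c, ?_⟩
    have hsum := P.sum_step_mul ⟨hp, ht⟩
    rw [hc] at hsum
    push_cast at hsum
    rw [G.neg_log_pathRatio, zsmul_eq_mul]
    linarith
  obtain ⟨c, hc⟩ := AddSubgroup.mem_zmultiples_iff.1
    (closure_minimal hle (AddSubgroup.isClosed_of_discrete (H := H)) hGM)
  rw [zsmul_eq_mul, ← mul_assoc] at hc
  have hunit : (c : ℝ) * Nat.setGcd (P.returnTimes i) = 1 :=
    mul_right_cancel₀ hτ.ne' (by rw [hc, one_mul])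
  have hunit' : c * (Nat.setGcd (P.returnTimes i) : ℤ) = 1 := by exact_mod_cast hunit
  exact_mod_cast Int.eq_one_of_mul_eq_one_left (Int.natCast_nonneg _) hunit'

variable {P} {Z : Set (V × ℤ)}

lemma mem_of_isPathBetween
    (hZ : ∀ e n, (G.init e, n) ∈ Z → (G.term e, n - P.step e) ∈ Z) {i j : V} {γ : List E}
    (hγ : G.IsPathBetween i j γ) {n : ℤ} (hn : (i, n) ∈ Z) :
    (j, n - (γ.map P.step).sum) ∈ Z := by
  induction γ generalizing i n with
  | nil => simpa [← G.isPathBetween_nil.1 hγ] using hn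
  | cons e es ih =>
    obtain ⟨rfl, hes⟩ := G.isPathBetween_cons.1 hγ
    simpa only [List.map_cons, List.sum_cons, sub_sub] using ih hes (hZ e n hn)

lemma mem_of_mem_closure_returnTimes
    (hZ : ∀ e n, (G.init e, n) ∈ Z → (G.term e, n - P.step e) ∈ Z) {i : V} {m : ℕ}
    (hm : m ∈ AddSubmonoid.closure (P.returnTimes i)) {n : ℤ} (hn : (i, n) ∈ Z) :
    (i, n - m) ∈ Z := by
  induction hm using AddSubmonoid.closure_induction generalizing n with
  | mem m hm =>
    obtain ⟨γ, hγ, hsum⟩ := hm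
    exact hsum ▸ mem_of_isPathBetween hZ hγ hn
  | zero => simpa using hn
  | add x y _ _ hx hy =>
    rw [Nat.cast_add, ← sub_sub]
    exact hy (hx hn)

lemma exists_forall_le_mem (hSC : G.StronglyConnected) (hτ : 0 < τ) (hGM : τ ∈ G.GM)
    (hne : Z.Nonempty) (hZ : ∀ e n, (G.init e, n) ∈ Z → (G.term e, n - P.step e) ∈ Z) :
    ∃ m : ℤ, ∀ i, ∀ n ≤ m, (i, n) ∈ Z := by
  obtain ⟨⟨i, n₀⟩, hi⟩ := hne
  obtain ⟨N, hN⟩ := Nat.exists_mem_closure_of_ge (P.returnTimes i)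
  choose γ hγ using hSC.exists_path i
  obtain ⟨B, hB⟩ := (Set.finite_range fun j => ((γ j).map P.step).sum).bddAbove
  refine ⟨n₀ - N - B, fun j n hn => ?_⟩
  have hBj : ((γ j).map P.step).sum ≤ B := hB (mem_range_self j)
  obtain ⟨m, hm⟩ := Int.eq_ofNat_of_zero_le (a := n₀ - n - ((γ j).map P.step).sum) (by lia)
  have hreturn : (i, n₀ - m) ∈ Z := mem_of_mem_closure_returnTimes hZ
    (hN m (by lia) (by simp [P.setGcd_returnTimes hSC hτ hGM])) hi
  have hmem := mem_of_isPathBetween hZ (hγ j) hreturn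
  rwa [show n₀ - m - ((γ j).map P.step).sum = n by lia] at hmem

end LatticePotential

/-! ### Attractors and collars -/

lemma infDist_image_le_mul {X Y : Type*} [PseudoMetricSpace X] [PseudoMetricSpace Y] {S : X → Y}
    {c : ℝ} (hc : 0 ≤ c) (hS : ∀ x y, dist (S x) (S y) ≤ c * dist x y) {A : Set X} {B : Set Y}
    (hA : A.Nonempty) (hAB : MapsTo S A B) (x : X) : infDist (S x) B ≤ c * infDist x A := by
  refine le_of_forall_pos_lt_add fun ε hε => ?_
  obtain ⟨y, hy, hxy⟩ := (infDist_lt_iff hA).1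
    (lt_add_of_pos_right (infDist x A) (show 0 < ε / (c + 1) by positivity))
  calc infDist (S x) B ≤ dist (S x) (S y) := infDist_le_dist_of_mem (hAB hy)
    _ ≤ c * dist x y := hS x y
    _ ≤ c * (infDist x A + ε / (c + 1)) := by gcongr
    _ < c * infDist x A + ε := by
      rw [mul_add, add_lt_add_iff_left, mul_div_assoc', div_lt_iff₀ (by positivity)]
      nlinarith

namespace MWGraph

/-- The points of `KC i` whose `2 exp (-t)`-ball is not contained in `U i`. Only near these points
can a ball of radius `exp (-t)` meet two of the copies `S_e(KC (term e))`. -/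
def collar {d : ℕ} {V : Type} (U KC : V → Set (Pt d)) (i : V) (t : ℝ) : Set (Pt d) :=
  {x ∈ KC i | ¬ closedBall x (2 * Real.exp (-t)) ⊆ U i}

lemma collar_subset {d : ℕ} {V : Type} {U KC : V → Set (Pt d)} (i : V) (t : ℝ) :
    collar U KC i t ⊆ KC i := fun _ hx => hx.1

variable {d : ℕ} {V E : Type} [Fintype V] [Fintype E] {G : MWGraph d V E}
  {C K KC U : V → Set (Pt d)}

lemma subset_of_invariant {A B : V → Set (Pt d)} (hA : ∀ i, Bornology.IsBounded (A i))
    (hB : ∀ i, IsClosed (B i)) (hBne : ∀ i, (B i).Nonempty)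
    (hAB : ∀ i, A i ⊆ (⋃ e ∈ {e : E | G.init e = i}, G.S e '' A (G.term e)) ∪ B i)
    (hBB : ∀ e, G.S e '' B (G.term e) ⊆ B (G.init e)) (i : V) : A i ⊆ B i := by
  obtain ⟨ρ, hρ0, hρ1, hρ⟩ := G.exists_r_le
  have hdist (i : V) : ∃ D, ∀ x ∈ A i, infDist x (B i) ≤ D := by
    obtain ⟨b, hb⟩ := hBne i
    obtain ⟨D, hD⟩ := (hA i).subset_closedBall b
    exact ⟨D, fun x hx => (infDist_le_dist_of_mem hb).trans (hD hx)⟩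
  choose D hD using hdist
  obtain ⟨M, hM⟩ := (Set.finite_range D).bddAbove
  have hpow (n : ℕ) : ∀ i, ∀ x ∈ A i, infDist x (B i) ≤ ρ ^ n * |M| := by
    induction n with
    | zero =>
      intro i x hx
      simpa using ((hD i x hx).trans (hM (mem_range_self i))).trans (le_abs_self M)
    | succ n ih =>
      intro i x hx
      rcases hAB i hx with h | h
      · obtain ⟨e, rfl, y, hy, rfl⟩ := mem_iUnion₂.1 h
        calc infDist (G.S e y) (B (G.init e)) ≤ G.r e * infDist y (B (G.term e)) :=
              infDist_image_le_mul (G.r_pos e).le (fun x y => (G.S_sim e x y).le) (hBne _)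
                (mapsTo_iff_image_subset.2 (hBB e)) y
          _ ≤ ρ * (ρ ^ n * |M|) :=
              mul_le_mul (hρ e) (ih _ y hy) infDist_nonneg hρ0
          _ = ρ ^ (n + 1) * |M| := by ring
      · rw [infDist_zero_of_mem h]
        positivity
  intro x hx
  have hlim : Tendsto (fun n : ℕ => ρ ^ n * |M|) atTop (𝓝 0) := by
    simpa using (tendsto_pow_atTop_nhds_zero_of_lt_one hρ0 hρ1).mul_const |M|
  exact ((hB i).mem_iff_infDist_zero (hBne i)).2
    (le_antisymm (ge_of_tendsto' hlim fun n => hpow n i x hx) infDist_nonneg)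

lemma IsInhomAttractor.image_subset (hKC : G.IsInhomAttractor C KC) (e : E) :
    G.S e '' KC (G.term e) ⊆ KC (G.init e) := by
  conv_rhs => rw [hKC.2.2]
  exact subset_union_of_subset_left
    (subset_biUnion_of_mem (u := fun e => G.S e '' KC (G.term e)) (rfl : G.init e = G.init e)) _

lemma IsInhomAttractor.condensation_subset (hKC : G.IsInhomAttractor C KC) (i : V) :
    C i ⊆ KC i := by
  conv_rhs => rw [hKC.2.2]
  exact subset_union_right

lemma IsInhomAttractor.isBounded (hKC : G.IsInhomAttractor C KC) (i : V) :
    Bornology.IsBounded (KC i) := (hKC.1 i).isBounded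

lemma IsAttractor.subset_inhom (hK : G.IsAttractor K) (hKC : G.IsInhomAttractor C KC) (i : V) :
    K i ⊆ KC i :=
  subset_of_invariant (fun i => (hK.1 i).isBounded) (fun i => (hKC.1 i).isClosed) hKC.2.1
    (fun i => (hK.2.2 i).subset.trans subset_union_left) hKC.image_subset i

lemma IsOSCWith.isOpen (hU : G.IsOSCWith U) (i : V) : IsOpen (U i) := hU.2.1 i

lemma IsOSCWith.image_subset (hU : G.IsOSCWith U) (e : E) :
    G.S e '' U (G.term e) ⊆ U (G.init e) :=
  (subset_biUnion_of_mem (u := fun e => G.S e '' U (G.term e))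
    (rfl : G.init e = G.init e)).trans (hU.2.2.2.2.1 _)

lemma IsOSCWith.disjoint (hU : G.IsOSCWith U) {e e' : E} (h : G.init e = G.init e')
    (hne : e ≠ e') : Disjoint (G.S e '' U (G.term e)) (G.S e' '' U (G.term e')) :=
  hU.2.2.2.2.2 e e' h hne

lemma IsInhomAttractor.subset_closure (hKC : G.IsInhomAttractor C KC) (hU : G.IsOSCWith U)
    (hCU : ∀ i, C i ⊆ closure (U i)) (i : V) : KC i ⊆ closure (U i) :=
  subset_of_invariant hKC.isBounded (fun _ => isClosed_closure) (fun i => (hU.1 i).closure)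
    (fun i => (hKC.2.2 i).subset.trans (union_subset_union_right _ (hCU i)))
    (fun e => (image_closure_subset_closure_image (G.S_continuous e)).trans
      (closure_mono (hU.image_subset e))) i

lemma mem_collar_term (hU : G.IsOSCWith U) {e : E} {y : Pt d} {t : ℝ} (hy : y ∈ KC (G.term e))
    (h : G.S e y ∈ collar U KC (G.init e) t) : y ∈ collar U KC (G.term e) (t - G.len e) := by
  refine ⟨hy, fun hball => h.2 ?_⟩
  rw [← image_closedBall]
  exact (image_mono hball).trans (hU.image_subset e)

lemma mem_collar_of_dist_le (hU : G.IsOSCWith U) (hKU : ∀ i, KC i ⊆ closure (U i)) {e e' : E}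
    (h : G.init e = G.init e') (hne : e ≠ e') {y y' : Pt d} (hy : y ∈ KC (G.term e))
    (hy' : y' ∈ KC (G.term e')) {t : ℝ} (hdist : dist (G.S e y) (G.S e' y') ≤ 2 * Real.exp (-t)) :
    y ∈ collar U KC (G.term e) (t - G.len e) := by
  refine ⟨hy, fun hball => ?_⟩
  have hmem : G.S e' y' ∈ G.S e '' U (G.term e) := by
    refine image_mono hball ?_
    rw [image_closedBall]
    exact mem_closedBall'.2 hdist
  have hclosure : G.S e' y' ∈ closure (G.S e' '' U (G.term e')) :=
    image_closure_subset_closure_image (G.S_continuous e') (mem_image_of_mem _ (hKU _ hy'))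
  exact ((hU.disjoint h hne).closure_right (G.S_isOpenMap e _ (hU.isOpen _))).le_bot
    ⟨hmem, hclosure⟩

variable [DecidableEq V] (s : ℝ)

lemma IsInhomAttractor.eq_biUnion (hKC : G.IsInhomAttractor C KC) (i : V) :
    KC i = (⋃ e ∈ ({e | G.init e = i} : Finset E), G.S e '' KC (G.term e)) ∪ C i := by
  simpa only [Finset.mem_filter_univ, mem_ofPred_eq] using hKC.2.2 i

lemma IsInhomAttractor.scaledCover_le (hKC : G.IsInhomAttractor C KC) (i : V) (t : ℝ) :
    scaledCover s (KC i) t ≤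
      ∑ e with G.init e = i, G.r e ^ s * scaledCover s (KC (G.term e)) (t - G.len e) +
        scaledCover s (C i) t := by
  have hbounded (e : E) : Bornology.IsBounded (G.S e '' KC (G.term e)) :=
    isBounded_image (hKC.isBounded _)
  have hunion : Bornology.IsBounded
      (⋃ e ∈ ({e | G.init e = i} : Finset E), G.S e '' KC (G.term e)) :=
    (Bornology.isBounded_biUnion_finset _).2 fun e _ => hbounded e
  calc scaledCover s (KC i) t
      ≤ scaledCover s (⋃ e ∈ ({e | G.init e = i} : Finset E), G.S e '' KC (G.term e)) t +
          scaledCover s (C i) t := by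
        conv_lhs => rw [hKC.eq_biUnion i]
        exact scaledCover_union_le hunion ((hKC.isBounded i).subset (hKC.condensation_subset i))
    _ ≤ ∑ e with G.init e = i, scaledCover s (G.S e '' KC (G.term e)) t +
          scaledCover s (C i) t := by
        gcongr
        exact scaledCover_biUnion_le fun e _ => hbounded e
    _ = _ := by simp only [scaledCover_image (hKC.isBounded _)]

lemma IsInhomAttractor.sum_le_scaledCover (hKC : G.IsInhomAttractor C KC) (hU : G.IsOSCWith U)
    (hKU : ∀ i, KC i ⊆ closure (U i)) (i : V) (t : ℝ) :
    ∑ e with G.init e = i, G.r e ^ s * scaledCover s (KC (G.term e)) (t - G.len e) ≤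
      scaledCover s (KC i) t + ∑ e with G.init e = i,
        G.r e ^ s * scaledCover s (collar U KC (G.term e) (t - G.len e)) (t - G.len e) := by
  have hcollar (e : E) : Bornology.IsBounded (collar U KC (G.term e) (t - G.len e)) :=
    (hKC.isBounded _).subset (collar_subset _ _)
  have himage (e : E) : Bornology.IsBounded (G.S e '' KC (G.term e)) :=
    isBounded_image (hKC.isBounded _)
  have himage_collar (e : E) :
      Bornology.IsBounded (G.S e '' collar U KC (G.term e) (t - G.len e)) :=
    isBounded_image (hcollar e)
  simp only [← scaledCover_image (hKC.isBounded _), ← scaledCover_image (hcollar _)]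
  refine (sum_scaledCover_le (fun e _ => himage e) (fun e _ => himage_collar e) ?_).trans ?_
  · rintro e he e' he' hne _ ⟨y, hy, rfl⟩ _ ⟨y', hy', rfl⟩ hdist
    rw [Finset.mem_filter_univ] at he he'
    exact mem_image_of_mem _
      (mem_collar_of_dist_le hU hKU (he.trans he'.symm) hne hy hy' hdist)
  · gcongr
    refine scaledCover_mono (hKC.isBounded i) (iUnion₂_subset fun e he => ?_)
    rw [Finset.mem_filter_univ] at he
    exact he ▸ hKC.image_subset e

lemma IsInhomAttractor.abs_scaledCover_sub_le (hKC : G.IsInhomAttractor C KC)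
    (hU : G.IsOSCWith U) (hKU : ∀ i, KC i ⊆ closure (U i)) (i : V) (t : ℝ) :
    |scaledCover s (KC i) t -
        ∑ e with G.init e = i, G.r e ^ s * scaledCover s (KC (G.term e)) (t - G.len e)| ≤
      scaledCover s (C i) t + ∑ e with G.init e = i,
        G.r e ^ s * scaledCover s (collar U KC (G.term e) (t - G.len e)) (t - G.len e) := by
  have hC : 0 ≤ scaledCover s (C i) t := scaledCover_nonneg
  have hcollar : 0 ≤ ∑ e with G.init e = i,
      G.r e ^ s * scaledCover s (collar U KC (G.term e) (t - G.len e)) (t - G.len e) :=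
    Finset.sum_nonneg fun e _ => mul_nonneg (G.r_rpow_pos e s).le scaledCover_nonneg
  rw [abs_le]
  constructor
  · linarith [hKC.sum_le_scaledCover s hU hKU i t]
  · linarith [hKC.scaledCover_le s i t]

end MWGraph

/-! ### Packings and the lower bound -/

/-- `p` is a finite set of points of `A` whose closed `r`-balls are pairwise disjoint and
contained in `W`. -/
structure IsPacking {X : Type*} [PseudoMetricSpace X] (A W : Set X) (r : ℝ) (p : Finset X) :
    Prop where
  subset : ↑p ⊆ A
  closedBall_subset : ∀ x ∈ p, closedBall x r ⊆ W
  disjoint : (p : Set X).PairwiseDisjoint fun x => closedBall x r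

/-- The largest cardinality of a packing; this is `0` if the cardinalities are unbounded. -/
def packingNumber {X : Type*} [PseudoMetricSpace X] (A W : Set X) (r : ℝ) : ℕ :=
  sSup {n | ∃ p, IsPacking A W r p ∧ p.card = n}

namespace IsPacking

variable {X Y : Type*} [PseudoMetricSpace X] [PseudoMetricSpace Y] {A A' W W' : Set X} {r : ℝ}
  {p : Finset X}

lemma mono (hp : IsPacking A W r p) (hA : A ⊆ A') (hW : W ⊆ W') : IsPacking A' W' r p :=
  ⟨hp.subset.trans hA, fun x hx => (hp.closedBall_subset x hx).trans hW, hp.disjoint⟩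

lemma image [DecidableEq Y] {S : X → Y} {c : ℝ} (hc : 0 < c)
    (hS : ∀ x y, dist (S x) (S y) = c * dist x y) (hinj : Function.Injective S)
    (hsurj : Function.Surjective S) (hp : IsPacking A W r p) :
    IsPacking (S '' A) (S '' W) (c * r) (p.image S) where
  subset := by
    rw [Finset.coe_image]
    exact image_mono hp.subset
  closedBall_subset := Finset.forall_mem_image.2 fun x hx => by
    rw [← image_closedBall_of_dist_eq_mul hc hS hsurj]
    exact image_mono (hp.closedBall_subset x hx)
  disjoint := by
    rw [Finset.coe_image]
    rintro _ ⟨x, hx, rfl⟩ _ ⟨y, hy, rfl⟩ hne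
    simp only [Function.onFun, ← image_closedBall_of_dist_eq_mul hc hS hsurj]
    exact (Set.disjoint_image_iff hinj).2 (hp.disjoint hx hy (ne_of_apply_ne S hne))

lemma biUnion [DecidableEq X] {ι : Type*} {I : Finset ι} {A W : ι → Set X} {p : ι → Finset X}
    (hW : (I : Set ι).PairwiseDisjoint W) (hp : ∀ i ∈ I, IsPacking (A i) (W i) r (p i)) :
    IsPacking (⋃ i ∈ I, A i) (⋃ i ∈ I, W i) r (I.biUnion p) where
  subset x hx := by
    obtain ⟨i, hi, hx⟩ := Finset.mem_biUnion.1 hx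
    exact mem_biUnion hi ((hp i hi).subset hx)
  closedBall_subset x hx := by
    obtain ⟨i, hi, hx⟩ := Finset.mem_biUnion.1 hx
    exact ((hp i hi).closedBall_subset x hx).trans (subset_biUnion_of_mem (u := W) hi)
  disjoint x hx y hy hne := by
    obtain ⟨i, hi, hx⟩ := Finset.mem_biUnion.1 hx
    obtain ⟨j, hj, hy⟩ := Finset.mem_biUnion.1 hy
    rcases eq_or_ne i j with rfl | hij
    · exact (hp i hi).disjoint hx hy hne
    · exact (hW hi hj hij).mono ((hp i hi).closedBall_subset x hx)
        ((hp j hj).closedBall_subset y hy)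

lemma card_biUnion [DecidableEq X] {ι : Type*} {I : Finset ι} {A W : ι → Set X}
    {p : ι → Finset X} (hr : 0 ≤ r) (hW : (I : Set ι).PairwiseDisjoint W)
    (hp : ∀ i ∈ I, IsPacking (A i) (W i) r (p i)) :
    (I.biUnion p).card = ∑ i ∈ I, (p i).card := by
  refine Finset.card_biUnion fun i hi j hj hij => Finset.disjoint_left.2 fun x hxi hxj => ?_
  exact (hW hi hj hij).le_bot ⟨(hp i hi).closedBall_subset x hxi (mem_closedBall_self hr),
    (hp j hj).closedBall_subset x hxj (mem_closedBall_self hr)⟩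

end IsPacking

section PackingNumber

variable {d : ℕ} {A A' W W' : Set (Pt d)} {r : ℝ}

lemma bddAbove_card_isPacking (hA : Bornology.IsBounded A) (hr : 0 < r) :
    coveringNumber A r ∈ upperBounds {n | ∃ p, IsPacking A W r p ∧ p.card = n} := by
  rintro _ ⟨p, hp, rfl⟩
  exact card_le_coveringNumber hA hr hp.subset hp.disjoint

lemma nonempty_card_isPacking : {n | ∃ p, IsPacking A W r p ∧ p.card = n}.Nonempty :=
  ⟨0, ∅, ⟨by simp, by simp, by simp⟩, rfl⟩

lemma IsPacking.card_le_packingNumber (hA : Bornology.IsBounded A) (hr : 0 < r)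
    {p : Finset (Pt d)} (hp : IsPacking A W r p) : p.card ≤ packingNumber A W r :=
  le_csSup ⟨_, bddAbove_card_isPacking hA hr⟩ ⟨p, hp, rfl⟩

lemma packingNumber_le_coveringNumber (hA : Bornology.IsBounded A) (hr : 0 < r) :
    packingNumber A W r ≤ coveringNumber A r :=
  csSup_le nonempty_card_isPacking (bddAbove_card_isPacking hA hr)

lemma exists_isPacking_card_eq (hA : Bornology.IsBounded A) (hr : 0 < r) :
    ∃ p, IsPacking A W r p ∧ p.card = packingNumber A W r :=
  Nat.sSup_mem nonempty_card_isPacking ⟨_, bddAbove_card_isPacking hA hr⟩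

lemma packingNumber_mono (hA' : Bornology.IsBounded A') (hr : 0 < r) (hA : A ⊆ A')
    (hW : W ⊆ W') : packingNumber A W r ≤ packingNumber A' W' r := by
  obtain ⟨p, hp, hcard⟩ := exists_isPacking_card_eq (W := W) (hA'.subset hA) hr
  exact hcard ▸ (hp.mono hA hW).card_le_packingNumber hA' hr

lemma one_le_packingNumber (hA : Bornology.IsBounded A) (hr : 0 < r) {x : Pt d} (hx : x ∈ A)
    (hball : closedBall x r ⊆ W) : 1 ≤ packingNumber A W r :=
  IsPacking.card_le_packingNumber (p := {x}) hA hr ⟨by simpa using hx, by simpa using hball,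
    by simp⟩

lemma packingNumber_le_image {S : Pt d → Pt d} {c : ℝ} (hc : 0 < c)
    (hS : ∀ x y, dist (S x) (S y) = c * dist x y) (hinj : Function.Injective S)
    (hA : Bornology.IsBounded A) (hr : 0 < r) :
    packingNumber A W r ≤ packingNumber (S '' A) (S '' W) (c * r) := by
  classical
  obtain ⟨p, hp, hcard⟩ := exists_isPacking_card_eq (W := W) hA hr
  rw [← hcard, ← Finset.card_image_of_injective p hinj]
  exact (hp.image hc hS hinj (surjective_of_dist_eq_mul hc hS)).card_le_packingNumber
    (isBounded_image_of_dist_eq_mul hS hA) (mul_pos hc hr)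

lemma sum_packingNumber_le {ι : Type*} {I : Finset ι} {A W : ι → Set (Pt d)}
    (hA : ∀ i ∈ I, Bornology.IsBounded (A i)) (hr : 0 < r)
    (hW : (I : Set ι).PairwiseDisjoint W) :
    ∑ i ∈ I, packingNumber (A i) (W i) r ≤ packingNumber (⋃ i ∈ I, A i) (⋃ i ∈ I, W i) r := by
  classical
  choose! p hp hcard using fun i hi => exists_isPacking_card_eq (W := W i) (hA i hi) hr
  rw [← Finset.sum_congr rfl hcard, ← IsPacking.card_biUnion hr.le hW hp]
  exact (IsPacking.biUnion hW hp).card_le_packingNumber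
    ((Bornology.isBounded_biUnion_finset I).2 hA) hr

end PackingNumber

namespace MWGraph

variable {d : ℕ} {V E : Type} [Fintype V] [Fintype E] {G : MWGraph d V E}
  {C K KC U : V → Set (Pt d)}

lemma IsAttractor.exists_eventually_closedBall_subset (hK : G.IsAttractor K)
    (hKC : G.IsInhomAttractor C KC) (hU : G.IsOSCWith U) (hUK : ∀ i, (U i ∩ K i).Nonempty) :
    ∃ t₀, ∀ i, ∀ t ≥ t₀, ∃ x ∈ KC i, closedBall x (Real.exp (-t)) ⊆ U i := by
  have hvertex (i : V) : ∃ t₀, ∀ t ≥ t₀, ∃ x ∈ KC i, closedBall x (Real.exp (-t)) ⊆ U i := by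
    obtain ⟨x, hx, hxK⟩ := hUK i
    obtain ⟨ε, hε, hball⟩ := nhds_basis_closedBall.mem_iff.1 ((hU.isOpen i).mem_nhds hx)
    refine ⟨-Real.log ε, fun t ht => ⟨x, hK.subset_inhom hKC i hxK, ?_⟩⟩
    refine (closedBall_subset_closedBall ?_).trans hball
    rw [← Real.le_log_iff_exp_le hε]
    linarith
  choose f hf using hvertex
  obtain ⟨t₀, ht₀⟩ := (Set.finite_range f).bddAbove
  exact ⟨t₀, fun i t ht => hf i t ((ht₀ (mem_range_self i)).trans ht)⟩

variable [DecidableEq V] {s : ℝ} {v : V → ℝ}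

lemma IsInhomAttractor.sum_packingNumber_le (hKC : G.IsInhomAttractor C KC)
    (hU : G.IsOSCWith U) (i : V) (t : ℝ) :
    ∑ e with G.init e = i,
        packingNumber (KC (G.term e)) (U (G.term e)) (Real.exp (-(t - G.len e))) ≤
      packingNumber (KC i) (U i) (Real.exp (-t)) := by
  have hbounded (e : E) : Bornology.IsBounded (G.S e '' KC (G.term e)) :=
    isBounded_image (hKC.isBounded _)
  have hdisjoint : (({e | G.init e = i} : Finset E) : Set E).PairwiseDisjoint
      fun e => G.S e '' U (G.term e) := fun e he e' he' hne => by
    rw [Finset.mem_coe, Finset.mem_filter_univ] at he he'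
    exact hU.disjoint (he.trans he'.symm) hne
  calc _ ≤ ∑ e with G.init e = i,
        packingNumber (G.S e '' KC (G.term e)) (G.S e '' U (G.term e)) (Real.exp (-t)) := by
        refine Finset.sum_le_sum fun e _ => ?_
        rw [G.exp_neg_eq_r_mul e t]
        exact packingNumber_le_image (G.r_pos e) (G.S_sim e) (G.S_injective e)
          (hKC.isBounded _) (Real.exp_pos _)
    _ ≤ packingNumber (⋃ e ∈ ({e | G.init e = i} : Finset E), G.S e '' KC (G.term e))
          (⋃ e ∈ ({e | G.init e = i} : Finset E), G.S e '' U (G.term e)) (Real.exp (-t)) :=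
        _root_.sum_packingNumber_le (fun e _ => hbounded e) (Real.exp_pos _) hdisjoint
    _ ≤ _ := by
        refine packingNumber_mono (hKC.isBounded i) (Real.exp_pos _)
          (iUnion₂_subset fun e he => ?_) (iUnion₂_subset fun e he => ?_)
        · exact (Finset.mem_filter_univ e).1 he ▸ hKC.image_subset e
        · exact (Finset.mem_filter_univ e).1 he ▸ hU.image_subset e

lemma IsPerronVector.sum_weight (hv : G.IsPerronVector s v) (i : V) :
    ∑ e with G.init e = i, G.r e ^ s * v (G.term e) / v (G.init e) = 1 := by
  rw [Finset.sum_congr rfl fun e he => by rw [(Finset.mem_filter_univ e).1 he],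
    ← Finset.sum_div, hv.2, div_self (hv.1 i).ne']

lemma IsPerronVector.weight_pos (hv : G.IsPerronVector s v) (e : E) :
    0 < G.r e ^ s * v (G.term e) / v (G.init e) :=
  div_pos (mul_pos (G.r_rpow_pos e s) (hv.1 _)) (hv.1 _)

lemma IsPerronVector.exists_pos_le_of_supersolution (hv : G.IsPerronVector s v)
    {f : V → ℝ → ℝ} {t₀ : ℝ}
    (hf : ∀ i t, ∑ e with G.init e = i, G.r e ^ s * f (G.term e) (t - G.len e) ≤ f i t)
    (hstart : ∀ t₁, ∃ c > 0, ∀ i, ∀ t ∈ Ico t₀ t₁, c ≤ f i t) (i : V) :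
    ∃ c > 0, ∀ t ≥ t₀, c ≤ f i t := by
  obtain ⟨a, R, ha, hlen⟩ := G.exists_len_mem_Icc
  obtain ⟨c, hc, hcf⟩ := hstart (t₀ + R)
  obtain ⟨M, hM⟩ := (Set.finite_range v).bddAbove
  replace hM (j : V) : v j ≤ M := hM (mem_range_self j)
  let next (x : V × ℝ) (e : E) : V × ℝ := (G.term e, x.2 - G.len e)
  let w (x : V × ℝ) : ℝ := f x.1 x.2 / v x.1
  let q (e : E) : ℝ := G.r e ^ s * v (G.term e) / v (G.init e)
  have hsuper (x : V × ℝ) : ∑ e with G.init e = x.1, q e * w (next x e) ≤ w x := by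
    have hterm (e : E) (he : G.init e = x.1) :
        q e * w (next x e) = G.r e ^ s * f (G.term e) (x.2 - G.len e) / v x.1 := by
      have := (hv.1 (G.term e)).ne'
      simp only [q, w, next, he]
      field_simp
    rw [Finset.sum_congr rfl fun e he => hterm e ((Finset.mem_filter_univ e).1 he),
      ← Finset.sum_div]
    exact div_le_div_of_nonneg_right (hf x.1 x.2) (hv.1 x.1).le
  have hlower (x : V × ℝ) (hx : t₀ ≤ x.2) : c / M ≤ w x := by
    simpa using sub_le_of_supersolution (T := Prod.snd) (I := fun x => {e | G.init e = x.1})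
      (next := next) (w := w) (q := q) (R := R) (Φ := fun _ => 0) (T₁ := t₀ + R) ha
      monotone_const (fun e => (hv.weight_pos e).le) (fun x => hv.sum_weight x.1)
      (fun x e _ => ⟨by linarith [(hlen e).2], by linarith [(hlen e).1]⟩)
      (fun x _ => by simpa using hsuper x)
      (fun x hx => div_le_div₀ (hc.le.trans (hcf _ _ (by simpa using hx)))
        (hcf _ _ (by simpa using hx)) (hv.1 _) (hM _)) (by linarith)
  exact ⟨c / M * v i, mul_pos (div_pos hc ((hv.1 i).trans_le (hM i))) (hv.1 i),
    fun t ht => (le_div_iff₀ (hv.1 i)).1 (hlower (i, t) ht)⟩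

lemma exists_pos_eventually_le_scaledCover (hK : G.IsAttractor K)
    (hKC : G.IsInhomAttractor C KC) (hU : G.IsOSCWith U) (hUK : ∀ i, (U i ∩ K i).Nonempty)
    (hs : 0 ≤ s) (hv : G.IsPerronVector s v) (i : V) :
    ∃ c > 0, ∀ᶠ t in atTop, c ≤ scaledCover s (KC i) t := by
  obtain ⟨t₀, hstart⟩ := hK.exists_eventually_closedBall_subset hKC hU hUK
  let N (i : V) (t : ℝ) : ℕ := packingNumber (KC i) (U i) (Real.exp (-t))
  have hsuper (i : V) (t : ℝ) : ∑ e with G.init e = i, G.r e ^ s *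
      (Real.exp (-s * (t - G.len e)) * N (G.term e) (t - G.len e)) ≤
        Real.exp (-s * t) * N i t := by
    have hexp (e : E) : G.r e ^ s * Real.exp (-s * (t - G.len e)) = Real.exp (-s * t) := by
      rw [G.r_rpow, ← Real.exp_add]
      congr 1
      ring
    simp only [← mul_assoc, hexp, ← Finset.mul_sum]
    gcongr
    exact_mod_cast hKC.sum_packingNumber_le hU i t
  have hlower (t₁ : ℝ) : ∃ c > 0, ∀ i, ∀ t ∈ Ico t₀ t₁, c ≤ Real.exp (-s * t) * N i t := by
    refine ⟨_, Real.exp_pos (-s * t₁), fun i t ht => ?_⟩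
    obtain ⟨x, hx, hball⟩ := hstart i t ht.1
    have hN : 1 ≤ (N i t : ℝ) := mod_cast
      one_le_packingNumber (hKC.isBounded i) (Real.exp_pos _) hx hball
    refine (Real.exp_le_exp.2 ?_).trans (le_mul_of_one_le_right (Real.exp_pos _).le hN)
    nlinarith [ht.2]
  obtain ⟨c, hc, hcN⟩ := hv.exists_pos_le_of_supersolution hsuper hlower i
  refine ⟨c, hc, (eventually_ge_atTop t₀).mono fun t ht => (hcN t ht).trans ?_⟩
  exact mul_le_mul_of_nonneg_left
    (mod_cast packingNumber_le_coveringNumber (hKC.isBounded i) (Real.exp_pos _))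
    (Real.exp_pos _).le

end MWGraph

/-! ### The mass of the collars -/

namespace MWGraph

variable {d : ℕ} {V E : Type} [Fintype V] [Fintype E] {G : MWGraph d V E}
  {C K KC U : V → Set (Pt d)}

lemma dist_pathMap_le {ρ : ℝ} (hρ0 : 0 ≤ ρ) (hρ : ∀ e, G.r e ≤ ρ) (γ : List E) (x y : Pt d) :
    dist (G.pathMap γ x) (G.pathMap γ y) ≤ ρ ^ γ.length * dist x y := by
  induction γ with
  | nil => simp [pathMap]
  | cons e es ih =>
    simp only [pathMap, Function.comp_apply, G.S_sim, List.length_cons]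
    calc G.r e * dist (G.pathMap es x) (G.pathMap es y)
        ≤ ρ * (ρ ^ es.length * dist x y) := by
          gcongr
          exact hρ e
      _ = ρ ^ (es.length + 1) * dist x y := by ring

lemma IsAttractor.exists_path_length_eq (hK : G.IsAttractor K) (n : ℕ) {i : V} {x : Pt d}
    (hx : x ∈ K i) :
    ∃ j γ, γ.length = n ∧ G.IsPathBetween i j γ ∧ x ∈ G.pathMap γ '' K j := by
  induction n generalizing i x with
  | zero => exact ⟨i, [], rfl, isPathBetween_nil.2 rfl, x, hx, rfl⟩
  | succ n ih =>
    rw [hK.2.2 i] at hx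
    obtain ⟨e, he, y, hy, rfl⟩ := mem_iUnion₂.1 hx
    obtain ⟨j, γ, hlength, hγ, z, hz, rfl⟩ := ih hy
    exact ⟨j, e :: γ, congrArg (· + 1) hlength, isPathBetween_cons.2 ⟨he, hγ⟩, z, hz, rfl⟩

lemma exists_path_disjoint_collar (hK : G.IsAttractor K) (hKC : G.IsInhomAttractor C KC)
    (hU : G.IsOSCWith U) (hUK : ∀ i, (U i ∩ K i).Nonempty) (i : V) :
    ∃ j η, G.IsPathBetween i j η ∧
      ∀ᶠ t in atTop, Disjoint (collar U KC i t) (G.pathMap η '' KC j) := by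
  obtain ⟨x₀, hx₀, hx₀K⟩ := hUK i
  obtain ⟨ε, hε, hball⟩ := Metric.isOpen_iff.1 (hU.isOpen i) x₀ hx₀
  obtain ⟨ρ, hρ0, hρ1, hρ⟩ := G.exists_r_le
  obtain ⟨D, hD⟩ := Metric.isBounded_iff.1 (Bornology.isBounded_iUnion.2 hKC.isBounded)
  have hpow : Tendsto (fun n : ℕ => ρ ^ n * D) atTop (𝓝 0) := by
    simpa using (tendsto_pow_atTop_nhds_zero_of_lt_one hρ0 hρ1).mul_const D
  obtain ⟨n, hn⟩ := (hpow.eventually_lt_const (half_pos hε)).exists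
  obtain ⟨j, η, rfl, hη, z, hz, rfl⟩ := hK.exists_path_length_eq n hx₀K
  have hexp : Tendsto (fun t => 2 * Real.exp (-t)) atTop (𝓝 0) := by
    simpa using Real.tendsto_exp_neg_atTop_nhds_zero.const_mul 2
  refine ⟨j, η, hη, (hexp.eventually_lt_const (half_pos hε)).mono fun t ht => ?_⟩
  refine Set.disjoint_left.2 ?_
  rintro _ hx ⟨y, hy, rfl⟩
  refine hx.2 fun w hw => hball ?_
  have hyz : dist (G.pathMap η y) (G.pathMap η z) ≤ ρ ^ η.length * D :=
    (dist_pathMap_le hρ0 hρ η y z).trans <| mul_le_mul_of_nonneg_left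
      (hD (mem_iUnion_of_mem j hy) (mem_iUnion_of_mem j (hK.subset_inhom hKC j hz)))
      (pow_nonneg hρ0 _)
  rw [mem_closedBall] at hw
  rw [mem_ball]
  linarith [dist_triangle w (G.pathMap η y) (G.pathMap η z)]

lemma prod_ofReal_r_rpow_ne_zero (s : ℝ) (γ : List E) :
    (γ.map fun e => ENNReal.ofReal (G.r e ^ s)).prod ≠ 0 := by
  simp [List.prod_eq_zero_iff, G.r_rpow_pos]

lemma prod_ofReal_r_rpow_ne_top (s : ℝ) (γ : List E) :
    (γ.map fun e => ENNReal.ofReal (G.r e ^ s)).prod ≠ ⊤ := by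
  induction γ with
  | nil => simp
  | cons e es ih =>
    rw [List.map_cons, List.prod_cons]
    exact ENNReal.mul_ne_top ENNReal.ofReal_ne_top ih

variable [DecidableEq V]

lemma IsPerronVector.sum_ofReal_le {s : ℝ} {v : V → ℝ} (hv : G.IsPerronVector s v) (i : V) :
    ∑ e with G.init e = i, ENNReal.ofReal (G.r e ^ s) * ENNReal.ofReal (v (G.term e)) ≤
      ENNReal.ofReal (v i) := by
  simp only [← ENNReal.ofReal_mul (G.r_rpow_pos _ s).le]
  rw [← ENNReal.ofReal_sum_of_nonneg fun e _ => (mul_pos (G.r_rpow_pos e s) (hv.1 _)).le, hv.2 i]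

end MWGraph

/-- The time-dependent set `A`, emptied at times outside `I`. -/
def restrictTime {X : Type*} (I : Set ℝ) (A : ℝ → Set X) (T : ℝ) : Set X := {x ∈ A T | T ∈ I}

lemma restrictTime_subset {X : Type*} {I : Set ℝ} {A : ℝ → Set X} (T : ℝ) :
    restrictTime I A T ⊆ A T := fun _ hx => hx.1

lemma scaledCover_restrictTime {d : ℕ} (s : ℝ) (I : Set ℝ) (A : ℝ → Set (Pt d)) (T : ℝ) :
    scaledCover s (restrictTime I A T) T = I.indicator (fun T => scaledCover s (A T) T) T := by
  by_cases hT : T ∈ I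
  · simp [restrictTime, hT]
  · simp [restrictTime, hT, scaledCover_empty]

namespace LatticePotential

variable {d : ℕ} {V E : Type} [Fintype V] [Fintype E] {G : MWGraph d V E} {τ : ℝ}

/-- The total scaled covering number of the time-dependent set `A` over the lattice of times
`n * τ + pot i` belonging to the vertex `i`. -/
def mass (P : LatticePotential G τ) (s : ℝ) (i : V) (A : ℝ → Set (Pt d)) : ℝ≥0∞ :=
  ∑' n : ℤ, ENNReal.ofReal (scaledCover s (A (n * τ + P.pot i)) (n * τ + P.pot i))

variable {P : LatticePotential G τ} {s : ℝ} {i : V} {A B D : ℝ → Set (Pt d)}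

lemma mass_empty : P.mass s i (fun _ => ∅) = 0 := by simp [mass, scaledCover_empty]

lemma mass_mono (hB : ∀ T, Bornology.IsBounded (B T)) (hAB : ∀ T, A T ⊆ B T) :
    P.mass s i A ≤ P.mass s i B :=
  ENNReal.tsum_le_tsum fun _ => ENNReal.ofReal_le_ofReal (scaledCover_mono (hB _) (hAB _))

lemma mass_union_le (hA : ∀ T, Bornology.IsBounded (A T)) (hB : ∀ T, Bornology.IsBounded (B T)) :
    P.mass s i (fun T => A T ∪ B T) ≤ P.mass s i A + P.mass s i B := by
  rw [mass, mass, mass, ← ENNReal.tsum_add]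
  refine ENNReal.tsum_le_tsum fun n => ?_
  rw [← ENNReal.ofReal_add scaledCover_nonneg scaledCover_nonneg]
  exact ENNReal.ofReal_le_ofReal (scaledCover_union_le (hA _) (hB _))

lemma mass_biUnion_le {ι : Type*} {I : Finset ι} {F : ι → ℝ → Set (Pt d)}
    (hF : ∀ k T, Bornology.IsBounded (F k T)) :
    P.mass s i (fun T => ⋃ k ∈ I, F k T) ≤ ∑ k ∈ I, P.mass s i (F k) := by
  simp only [mass]
  rw [← Summable.tsum_finsetSum fun _ _ => ENNReal.summable]
  refine ENNReal.tsum_le_tsum fun n => ?_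
  rw [← ENNReal.ofReal_sum_of_nonneg fun _ _ => scaledCover_nonneg]
  exact ENNReal.ofReal_le_ofReal (scaledCover_biUnion_le fun k _ => hF k _)

lemma time_sub_len (e : E) (n : ℤ) :
    n * τ + P.pot (G.init e) - G.len e = (n - P.step e : ℤ) * τ + P.pot (G.term e) := by
  push_cast
  linarith [P.step_mul e]

lemma mass_image (e : E) (hA : ∀ T, Bornology.IsBounded (A T)) :
    P.mass s (G.init e) (fun T => G.S e '' A (T - G.len e)) =
      ENNReal.ofReal (G.r e ^ s) * P.mass s (G.term e) A := by
  simp only [mass, MWGraph.scaledCover_image (hA _), time_sub_len,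
    ENNReal.ofReal_mul (G.r_rpow_pos e s).le, ENNReal.tsum_mul_left]
  congr 1
  exact (Equiv.subRight (P.step e)).tsum_eq fun n : ℤ => ENNReal.ofReal
    (scaledCover s (A (n * τ + P.pot (G.term e))) (n * τ + P.pot (G.term e)))

lemma mass_restrictTime (I : Set ℝ) : P.mass s i (restrictTime I A) =
    ∑' n : ℤ, I.indicator (fun T => ENNReal.ofReal (scaledCover s (A T) T))
      (n * τ + P.pot i) := by
  simp only [mass, scaledCover_restrictTime]
  refine tsum_congr fun n => ?_
  exact (congrFun (indicator_comp_of_zero ENNReal.ofReal_zero) _).symm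

lemma mass_restrictTime_Icc_lt_top (hτ : 0 < τ) (x y : ℝ) :
    P.mass s i (restrictTime (Icc x y) A) < ⊤ := by
  rw [mass_restrictTime, tsum_eq_sum
    (s := Finset.Icc ⌊(x - P.pot i) / τ⌋ ⌈(y - P.pot i) / τ⌉)]
  · refine ENNReal.sum_lt_top.2 fun n _ => ?_
    exact (indicator_le_self _ _ _).trans_lt ENNReal.ofReal_lt_top
  · intro n hn
    refine indicator_of_notMem (fun h => hn (Finset.mem_Icc.2 ⟨?_, ?_⟩)) _
    · refine Int.cast_le.1 ((Int.floor_le _).trans ?_ : (_ : ℝ) ≤ n)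
      rw [div_le_iff₀ hτ]
      linarith [h.1]
    · refine Int.cast_le.1 (le_trans ?_ (Int.le_ceil _) : (n : ℝ) ≤ _)
      rw [le_div_iff₀ hτ]
      linarith [h.2]

lemma mass_restrictTime_Ici_le {x : ℝ} {M : ℝ≥0∞}
    (h : ∀ y, P.mass s i (restrictTime (Icc x y) A) ≤ M) :
    P.mass s i (restrictTime (Ici x) A) ≤ M := by
  simp only [mass_restrictTime] at h ⊢
  rw [ENNReal.tsum_eq_iSup_sum]
  refine iSup_le fun J => ?_
  obtain ⟨y, hy⟩ := ((J : Set ℤ).toFinite.image fun n : ℤ => (n * τ + P.pot i : ℝ)).bddAbove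
  refine (Finset.sum_le_sum fun n hn => ?_).trans ((ENNReal.sum_le_tsum J).trans (h y))
  by_cases hx : (n * τ + P.pot i : ℝ) ∈ Ici x
  · rw [indicator_of_mem hx, indicator_of_mem
      (show (n * τ + P.pot i : ℝ) ∈ Icc x y from ⟨hx, hy (mem_image_of_mem _ hn)⟩)]
  · rw [indicator_of_notMem hx]
    exact zero_le

variable [DecidableEq V]

lemma mass_le_of_subset_biUnion {F : E → ℝ → Set (Pt d)}
    (hF : ∀ e T, Bornology.IsBounded (F e T)) (hD : ∀ T, Bornology.IsBounded (D T))
    (h : ∀ T, B T ⊆ (⋃ e ∈ ({e | G.init e = i} : Finset E), G.S e '' F e (T - G.len e)) ∪ D T) :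
    P.mass s i B ≤ ∑ e with G.init e = i, ENNReal.ofReal (G.r e ^ s) * P.mass s (G.term e) (F e) +
      P.mass s i D := by
  have himage (e : E) (T : ℝ) : Bornology.IsBounded (G.S e '' F e (T - G.len e)) :=
    MWGraph.isBounded_image (hF e _)
  have hunion (T : ℝ) : Bornology.IsBounded
      (⋃ e ∈ ({e | G.init e = i} : Finset E), G.S e '' F e (T - G.len e)) :=
    (Bornology.isBounded_biUnion_finset _).2 fun e _ => himage e T
  refine (mass_mono (fun T => (hunion T).union (hD T)) h).trans <|
    (mass_union_le hunion hD).trans ?_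
  gcongr
  refine (mass_biUnion_le himage).trans (Finset.sum_le_sum fun e he => ?_)
  rw [← mass_image e (hF e), (Finset.mem_filter_univ e).1 he]

lemma sum_add_le_sum_add_of_mem {ι M : Type*} [AddCommMonoid M] [PartialOrder M]
    [IsOrderedAddMonoid M] {I : Finset ι} {f g : ι → M} {k : ι} {x y : M} (hk : k ∈ I)
    (hfg : ∀ k ∈ I, f k ≤ g k) (h : f k + x ≤ g k + y) :
    ∑ k ∈ I, f k + x ≤ ∑ k ∈ I, g k + y := by
  classical
  rw [← Finset.sum_erase_add I f hk, ← Finset.sum_erase_add I g hk, add_assoc, add_assoc]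
  exact add_le_add (Finset.sum_le_sum fun k hk => hfg k (Finset.mem_of_mem_erase hk)) h

variable {u : V → ℝ≥0∞} {J : ℝ≥0∞}

lemma mass_add_le_of_first_edge (hs : 0 ≤ s) {e₁ : E} {x y : ℝ≥0∞} {F : E → ℝ → Set (Pt d)}
    (hD : ∀ T, Bornology.IsBounded (D T)) (hF : ∀ e T, Bornology.IsBounded (F e T))
    (hB : ∀ T, B T ⊆
      (⋃ e ∈ ({e | G.init e = G.init e₁} : Finset E), G.S e '' F e (T - G.len e)) ∪ D T)
    (hu : ∑ e with G.init e = G.init e₁, ENNReal.ofReal (G.r e ^ s) * u (G.term e) ≤ u (G.init e₁))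
    (hJ : ∀ e, P.mass s (G.term e) (F e) ≤ u (G.term e) * J)
    (h : P.mass s (G.term e₁) (F e₁) + x ≤ u (G.term e₁) * J + y) :
    P.mass s (G.init e₁) B + ENNReal.ofReal (G.r e₁ ^ s) * x ≤
      u (G.init e₁) * J + y + P.mass s (G.init e₁) D := by
  let c (e : E) : ℝ≥0∞ := ENNReal.ofReal (G.r e ^ s)
  have hc : c e₁ ≤ 1 :=
    ENNReal.ofReal_le_one.2 (Real.rpow_le_one (G.r_pos e₁).le (G.r_lt_one e₁).le hs)
  have hfirst : c e₁ * P.mass s (G.term e₁) (F e₁) + c e₁ * x ≤ c e₁ * (u (G.term e₁) * J) + y := by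
    calc c e₁ * P.mass s (G.term e₁) (F e₁) + c e₁ * x
        ≤ c e₁ * (u (G.term e₁) * J) + c e₁ * y := by
          rw [← mul_add, ← mul_add]
          gcongr
      _ ≤ c e₁ * (u (G.term e₁) * J) + y := by
          gcongr
          exact mul_le_of_le_one_left' hc
  calc P.mass s (G.init e₁) B + c e₁ * x
      ≤ ∑ e with G.init e = G.init e₁, c e * P.mass s (G.term e) (F e) +
          P.mass s (G.init e₁) D + c e₁ * x := by
        gcongr
        exact mass_le_of_subset_biUnion hF hD hB
    _ = ∑ e with G.init e = G.init e₁, c e * P.mass s (G.term e) (F e) + c e₁ * x +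
          P.mass s (G.init e₁) D := add_right_comm _ _ _
    _ ≤ ∑ e with G.init e = G.init e₁, c e * (u (G.term e) * J) + y +
          P.mass s (G.init e₁) D := by
        gcongr ?_ + _
        exact sum_add_le_sum_add_of_mem ((Finset.mem_filter_univ e₁).2 rfl)
          (fun e _ => mul_le_mul_right (hJ e) _) hfirst
    _ ≤ u (G.init e₁) * J + y + P.mass s (G.init e₁) D := by
        gcongr
        simp_rw [← mul_assoc, ← Finset.sum_mul]
        gcongr

variable {A D : V → ℝ → Set (Pt d)} {X : V → Set (Pt d)} {F : ℝ≥0∞}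

/- Lifting `B` along the first edge of `γ` keeps it off the rest of the path, while the lifts along
the other edges are bounded by the full masses; the saving occurs where the path ends, since there
the lift of `B` is empty. -/
lemma mass_add_le_of_disjoint_pathMap (hs : 0 ≤ s) (hX : ∀ i, Bornology.IsBounded (X i))
    (hAX : ∀ i T, A i T ⊆ X i) (hD : ∀ i T, Bornology.IsBounded (D i T))
    (hAD : ∀ i T, A i T ⊆
      (⋃ e ∈ ({e | G.init e = i} : Finset E), G.S e '' A (G.term e) (T - G.len e)) ∪ D i T)
    (hu : ∀ i, ∑ e with G.init e = i, ENNReal.ofReal (G.r e ^ s) * u (G.term e) ≤ u i)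
    (hJ : ∀ i, P.mass s i (A i) ≤ u i * J) (hF : ∀ i, P.mass s i (D i) ≤ F) {i j : V}
    {γ : List E} (hγ : G.IsPathBetween i j γ) {B : ℝ → Set (Pt d)} (hBA : ∀ T, B T ⊆ A i T)
    (hB : ∀ T, Disjoint (B T) (G.pathMap γ '' X j)) :
    P.mass s i B + (γ.map fun e => ENNReal.ofReal (G.r e ^ s)).prod * u j * J ≤
      u i * J + γ.length * F := by
  classical
  induction γ generalizing i B with
  | nil =>
    obtain rfl := MWGraph.isPathBetween_nil.1 hγ
    have hempty : B = fun _ => ∅ := funext fun T => (hB T).eq_bot_of_le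
      (((hBA T).trans (hAX i T)).trans (image_id _).superset)
    simp [hempty, mass_empty]
  | cons e₁ es ih =>
    obtain ⟨rfl, hes⟩ := MWGraph.isPathBetween_cons.1 hγ
    let lift (e : E) (T : ℝ) : Set (Pt d) := G.S e ⁻¹' B (T + G.len e) ∩ A (G.term e) T
    have hlift (e : E) (T : ℝ) : lift e T ⊆ A (G.term e) T := inter_subset_right
    have hA (i : V) (T : ℝ) : Bornology.IsBounded (A i T) := (hX i).subset (hAX i T)
    have hdisjoint (T : ℝ) : Disjoint (lift e₁ T) (G.pathMap es '' X j) := by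
      refine Set.disjoint_left.2 ?_
      rintro _ hx ⟨z, hz, rfl⟩
      exact (hB _).le_bot ⟨hx.1, z, hz, rfl⟩
    have hfirst := mass_add_le_of_first_edge hs (hD _) (fun e T => (hA _ T).subset (hlift e T))
      (fun T x hx => (hAD _ T (hBA T hx)).imp_left fun hx' => by
        obtain ⟨e, he, y, hy, rfl⟩ := mem_iUnion₂.1 hx'
        exact mem_biUnion he ⟨y, ⟨by simpa using hx, hy⟩, rfl⟩)
      (hu _) (fun e => (mass_mono (hA _) (hlift e)).trans (hJ _)) (ih hes (hlift e₁) hdisjoint)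
    rw [List.map_cons, List.prod_cons, List.length_cons, Nat.cast_succ, add_one_mul, ← add_assoc,
      mul_assoc, mul_assoc, ← mul_assoc _ (u j)]
    exact hfirst.trans (add_le_add_right (hF _) _)

lemma mass_le_of_disjoint_pathMap (hs : 0 ≤ s) (hX : ∀ i, Bornology.IsBounded (X i))
    (hAX : ∀ i T, A i T ⊆ X i) (hD : ∀ i T, Bornology.IsBounded (D i T))
    (hAD : ∀ i T, A i T ⊆
      (⋃ e ∈ ({e | G.init e = i} : Finset E), G.S e '' A (G.term e) (T - G.len e)) ∪ D i T)
    (hu : ∀ i, ∑ e with G.init e = i, ENNReal.ofReal (G.r e ^ s) * u (G.term e) ≤ u i)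
    (hu0 : ∀ i, u i ≠ 0) (hutop : ∀ i, u i ≠ ⊤) (hA : ∀ i, P.mass s i (A i) ≠ ⊤)
    (hF : ∀ i, P.mass s i (D i) ≤ F) {tgt : V → V} {η : V → List E}
    (hη : ∀ i, G.IsPathBetween i (tgt i) (η i))
    (hAη : ∀ i T, Disjoint (A i T) (G.pathMap (η i) '' X (tgt i))) (i : V) :
    P.mass s i (A i) ≤ u i * ∑ k, (η k).length * F /
      (((η k).map fun e => ENNReal.ofReal (G.r e ^ s)).prod * u (tgt k)) := by
  have : Nonempty V := ⟨i⟩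
  obtain ⟨k, hk⟩ := Finite.exists_max fun i => P.mass s i (A i) / u i
  set J := P.mass s k (A k) / u k
  set w := ((η k).map fun e => ENNReal.ofReal (G.r e ^ s)).prod
  have hJ (i : V) : P.mass s i (A i) ≤ u i * J :=
    (ENNReal.div_le_iff' (hu0 i) (hutop i)).1 (hk i)
  have hpath := mass_add_le_of_disjoint_pathMap hs hX hAX hD hAD hu hJ hF (hη k)
    (fun _ => Subset.rfl) (hAη k)
  have hmax : u k * J = P.mass s k (A k) := ENNReal.mul_div_cancel (hu0 k) (hutop k)
  rw [hmax, ENNReal.add_le_add_iff_left (hA k)] at hpath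
  refine (hJ i).trans (mul_le_mul_right ?_ _)
  have hJk : J ≤ (η k).length * F / (w * u (tgt k)) :=
    (ENNReal.le_div_iff_mul_le
      (.inl (mul_ne_zero (MWGraph.prod_ofReal_r_rpow_ne_zero s _) (hu0 _)))
      (.inl (ENNReal.mul_ne_top (MWGraph.prod_ofReal_r_rpow_ne_top s _) (hutop _)))).2
      (by rwa [mul_comm])
  exact hJk.trans (Finset.single_le_sum
    (f := fun k => (η k).length * F /
      (((η k).map fun e => ENNReal.ofReal (G.r e ^ s)).prod * u (tgt k)))
    (fun _ _ => zero_le) (Finset.mem_univ k))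

variable {C K KC U : V → Set (Pt d)}

lemma restrictTime_collar_subset (hKC : G.IsInhomAttractor C KC) (hU : G.IsOSCWith U)
    {t₀ R : ℝ} (ht₀ : 0 ≤ t₀) (hR : ∀ e, G.len e ≤ R) (N : ℝ) (i : V) (T : ℝ) :
    restrictTime (Icc t₀ N) (MWGraph.collar U KC i) T ⊆
      (⋃ e ∈ ({e | G.init e = i} : Finset E),
        G.S e '' restrictTime (Icc t₀ N) (MWGraph.collar U KC (G.term e)) (T - G.len e)) ∪
      (restrictTime (Ici 0) (fun _ => C i) T ∪
        restrictTime (Icc t₀ (t₀ + R)) (fun _ => KC i) T) := by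
  rintro x ⟨hx, hT₀, hTN⟩
  rcases (hKC.eq_biUnion i).subset hx.1 with h | h
  · obtain ⟨e, he, y, hy, rfl⟩ := mem_iUnion₂.1 h
    obtain rfl := (Finset.mem_filter_univ e).1 he
    by_cases hT : t₀ ≤ T - G.len e
    · exact .inl (mem_biUnion he ⟨y, ⟨MWGraph.mem_collar_term hU hy hx,
        hT, by linarith [G.len_pos e]⟩, rfl⟩)
    · exact .inr (.inr ⟨hx.1, hT₀, by linarith [hR e]⟩)
  · exact .inr (.inl ⟨h, ht₀.trans hT₀⟩)

lemma exists_mass_collar_lt_top {v : V → ℝ} (P : LatticePotential G τ) (hτ : 0 < τ) (hs : 0 ≤ s)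
    (hK : G.IsAttractor K) (hKC : G.IsInhomAttractor C KC) (hU : G.IsOSCWith U)
    (hUK : ∀ i, (U i ∩ K i).Nonempty) (hv : G.IsPerronVector s v)
    (hC : ∀ i, P.mass s i (restrictTime (Ici 0) fun _ => C i) < ⊤) :
    ∃ t₀, ∀ i, P.mass s i (restrictTime (Ici t₀) (MWGraph.collar U KC i)) < ⊤ := by
  choose tgt η hη hcollar using MWGraph.exists_path_disjoint_collar hK hKC hU hUK
  obtain ⟨_, R, _, hR⟩ := G.exists_len_mem_Icc
  obtain ⟨t₀, h₀⟩ :=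
    eventually_atTop.1 ((eventually_all.2 hcollar).and (eventually_ge_atTop (0 : ℝ)))
  have hbounded (I : Set ℝ) {A : ℝ → Set (Pt d)} {i : V} (hA : ∀ T, A T ⊆ KC i) (T : ℝ) :
      Bornology.IsBounded (restrictTime I A T) :=
    (hKC.isBounded i).subset ((restrictTime_subset T).trans (hA T))
  have hCbounded (i : V) := hbounded (Ici 0) (i := i) fun _ => hKC.condensation_subset i
  have hKCbounded (i : V) := hbounded (Icc t₀ (t₀ + R)) (i := i) fun _ => Subset.rfl
  let D (i : V) (T : ℝ) : Set (Pt d) := restrictTime (Ici 0) (fun _ => C i) T ∪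
    restrictTime (Icc t₀ (t₀ + R)) (fun _ => KC i) T
  have hD (i : V) : P.mass s i (D i) < ⊤ := (mass_union_le (hCbounded i) (hKCbounded i)).trans_lt
    (ENNReal.add_lt_top.2 ⟨hC i, mass_restrictTime_Icc_lt_top hτ _ _⟩)
  have hF : ∑ i, P.mass s i (D i) ≠ ⊤ := ENNReal.sum_ne_top.2 fun i _ => (hD i).ne
  have hw (i : V) : ((η i).map fun e => ENNReal.ofReal (G.r e ^ s)).prod *
      ENNReal.ofReal (v (tgt i)) ≠ 0 :=
    mul_ne_zero (MWGraph.prod_ofReal_r_rpow_ne_zero s _) (ENNReal.ofReal_pos.2 (hv.1 _)).ne'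
  refine ⟨t₀, fun i => (mass_restrictTime_Ici_le fun N => mass_le_of_disjoint_pathMap hs
    (A := fun i => restrictTime (Icc t₀ N) (MWGraph.collar U KC i)) hKC.isBounded
    (fun i T => (restrictTime_subset T).trans (MWGraph.collar_subset i T))
    (fun i T => (hCbounded i T).union (hKCbounded i T))
    (restrictTime_collar_subset hKC hU (h₀ t₀ le_rfl).2 (fun e => (hR e).2) N) hv.sum_ofReal_le
    (fun i => (ENNReal.ofReal_pos.2 (hv.1 i)).ne') (fun i => ENNReal.ofReal_ne_top)
    (fun i => (mass_restrictTime_Icc_lt_top hτ _ _).ne)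
    (fun i => Finset.single_le_sum (f := fun i => P.mass s i (D i)) (fun _ _ => zero_le)
      (Finset.mem_univ i)) hη (fun i T => Set.disjoint_left.2 fun x hx =>
        Set.disjoint_left.1 ((h₀ T hx.2.1).1 i) hx.1) i).trans_lt ?_⟩
  refine ENNReal.mul_lt_top ENNReal.ofReal_lt_top (ENNReal.sum_lt_top.2 fun k _ => ?_)
  exact ENNReal.div_lt_top (ENNReal.mul_ne_top (ENNReal.natCast_ne_top _) hF) (hw k)

end LatticePotential

/-! ### The limit along the lattice -/

lemma exists_periodic_tendsto {f : ℝ → ℝ} {τ c : ℝ} (hτ : 0 < τ)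
    (hf : ∀ y, ∃ L, Tendsto (fun n : ℤ => f (n * τ + y)) atTop (𝓝 L))
    (hc : ∀ᶠ t in atTop, c ≤ f t) :
    ∃ h : ℝ → ℝ, (∀ y, c ≤ h y) ∧ Function.Periodic h τ ∧
      ∀ y, Tendsto (fun n : ℤ => f (n * τ + y)) atTop (𝓝 (h y)) := by
  choose h hh using hf
  refine ⟨h, fun y => ?_, fun y => ?_, hh⟩
  · have htime : Tendsto (fun n : ℤ => n * τ + y) atTop atTop :=
      tendsto_atTop_add_const_right _ _ (tendsto_intCast_atTop_atTop.atTop_mul_const hτ)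
    exact ge_of_tendsto (hh y) (htime.eventually hc)
  · refine tendsto_nhds_unique (hh (y + τ)) ?_
    refine ((hh y).comp (tendsto_atTop_add_const_right _ 1 tendsto_id)).congr fun n => ?_
    simp only [Function.comp_apply, id, Int.cast_add, Int.cast_one]
    ring_nf

namespace LatticePotential

variable {d : ℕ} {V E : Type} [Fintype V] [Fintype E] {G : MWGraph d V E} {τ s : ℝ}
  {C K KC U : V → Set (Pt d)} {v : V → ℝ}

lemma mass_restrictTime_Ici_lt_top_of_lintegral (P : LatticePotential G τ) (hτ : 0 < τ)
    (hs : 0 ≤ s) {A : Set (Pt d)} (hA : Bornology.IsBounded A)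
    (hint : ∫⁻ t in Ioi 0, ENNReal.ofReal (scaledCover s A t) < ⊤) (i : V) :
    P.mass s i (restrictTime (Ici 0) fun _ => A) < ⊤ := by
  rw [mass_restrictTime]
  refine tsum_indicator_Ici_lt_top_of_lintegral hτ (ENNReal.ofReal_ne_top (r := Real.exp (s * τ)))
    (fun t t' h h' => ?_) hint _
  rw [← ENNReal.ofReal_mul (Real.exp_nonneg _)]
  exact ENNReal.ofReal_le_ofReal (scaledCover_le_mul_of_le_add hA hs h h')

lemma summable_of_mass_lt_top {P : LatticePotential G τ} {i : V} {A : ℝ → Set (Pt d)}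
    (hA : P.mass s i A < ⊤) :
    Summable fun n : ℤ => scaledCover s (A (n * τ + P.pot i)) (n * τ + P.pot i) := by
  refine (ENNReal.summable_toReal hA.ne).congr fun n => ?_
  exact ENNReal.toReal_ofReal scaledCover_nonneg

variable [DecidableEq V] (P : LatticePotential G τ)

/-- The Markov chain on the lattice of times of `P` whose transition probabilities are the weights
`r_e ^ s` normalised by the Perron vector `v`. -/
def walk (hτ : 0 < τ) (hv : G.IsPerronVector s v) : LatticeWalk V E where
  init := G.init
  term := G.term
  prob e := G.r e ^ s * v (G.term e) / v (G.init e)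
  step := P.step
  span := τ
  pot := P.pot
  span_pos := hτ
  prob_pos := hv.weight_pos
  sum_prob := hv.sum_weight
  drop_pos e := by
    rw [P.step_mul]
    linarith [G.len_pos e]

variable {P}

lemma walk_defect (hτ : 0 < τ) (hv : G.IsPerronVector s v) (A : V → Set (Pt d)) (p : V × ℤ) :
    (P.walk hτ hv).defect (fun p => scaledCover s (A p.1) ((P.walk hτ hv).time p) / v p.1) p =
      (scaledCover s (A p.1) ((P.walk hτ hv).time p) - ∑ e with G.init e = p.1,
        G.r e ^ s * scaledCover s (A (G.term e)) ((P.walk hτ hv).time p - G.len e)) / v p.1 := by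
  rw [LatticeWalk.defect, LatticeWalk.mean, sub_div, Finset.sum_div]
  congr 1
  refine Finset.sum_congr rfl fun e he => ?_
  obtain ⟨i, n⟩ := p
  obtain rfl := (Finset.mem_filter_univ e).1 he
  have htime : (P.walk hτ hv).time (G.init e, n) - G.len e =
      (P.walk hτ hv).time ((P.walk hτ hv).next (G.init e, n) e) := P.time_sub_len e n
  rw [htime]
  have hne : v (G.term e) ≠ 0 := (hv.1 _).ne'
  change G.r e ^ s * v (G.term e) / v (G.init e) * (_ / v (G.term e)) = _
  field_simp
  rfl

/-- At late times, a bound for the defect of the scaled covering numbers, arising from the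
condensation set and from the collars. -/
def defectBound (P : LatticePotential G τ) (s : ℝ) (C U KC : V → Set (Pt d)) (t₀ : ℝ) (i : V)
    (n : ℤ) : ℝ :=
  scaledCover s (restrictTime (Ici 0) (fun _ => C i) (n * τ + P.pot i)) (n * τ + P.pot i) +
    ∑ e with G.init e = i, G.r e ^ s *
      scaledCover s
        (restrictTime (Ici t₀) (MWGraph.collar U KC (G.term e))
          ((n - P.step e : ℤ) * τ + P.pot (G.term e)))
        ((n - P.step e : ℤ) * τ + P.pot (G.term e))

lemma defectBound_nonneg {t₀ : ℝ} {i : V} {n : ℤ} : 0 ≤ P.defectBound s C U KC t₀ i n :=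
  add_nonneg scaledCover_nonneg <| Finset.sum_nonneg fun e _ =>
    mul_nonneg (G.r_rpow_pos e s).le scaledCover_nonneg

lemma summable_defectBound {t₀ : ℝ} (hC : ∀ i, P.mass s i (restrictTime (Ici 0) fun _ => C i) < ⊤)
    (hcollar : ∀ i, P.mass s i (restrictTime (Ici t₀) (MWGraph.collar U KC i)) < ⊤) (i : V) :
    Summable (P.defectBound s C U KC t₀ i) :=
  (summable_of_mass_lt_top (hC i)).add <| summable_sum fun e _ =>
    ((summable_of_mass_lt_top (hcollar (G.term e))).comp_injective
      (Equiv.subRight (P.step e)).injective).mul_left _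

lemma abs_walk_defect_le (hτ : 0 < τ) (hKC : G.IsInhomAttractor C KC) (hU : G.IsOSCWith U)
    (hKU : ∀ i, KC i ⊆ closure (U i)) (hv : G.IsPerronVector s v) {t₀ R : ℝ}
    (hR : ∀ e, G.len e ≤ R) (p : V × ℤ) (hp : max 0 (t₀ + R) ≤ (P.walk hτ hv).time p) :
    |(P.walk hτ hv).defect (fun p => scaledCover s (KC p.1) ((P.walk hτ hv).time p) / v p.1) p| ≤
      P.defectBound s C U KC t₀ p.1 p.2 / v p.1 := by
  obtain ⟨i, n⟩ := p
  obtain ⟨h0, h1⟩ := max_le_iff.1 hp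
  rw [walk_defect, abs_div, abs_of_pos (hv.1 i)]
  refine div_le_div_of_nonneg_right
    ((hKC.abs_scaledCover_sub_le s hU hKU i _).trans_eq ?_) (hv.1 i).le
  refine congrArg₂ (· + ·) ?_ (Finset.sum_congr rfl fun e he => ?_)
  · rw [scaledCover_restrictTime]
    exact (indicator_of_mem (show _ ∈ Ici _ from h0) _).symm
  · obtain rfl := (Finset.mem_filter_univ e).1 he
    have htime : (P.walk hτ hv).time (G.init e, n) - G.len e =
        (n - P.step e : ℤ) * τ + P.pot (G.term e) := P.time_sub_len e n
    rw [htime, scaledCover_restrictTime, indicator_of_mem]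
    rw [← htime, mem_Ici]
    linarith [hR e]

lemma exists_summable_walk_defect (hτ : 0 < τ) (hs : 0 ≤ s) (hK : G.IsAttractor K)
    (hKC : G.IsInhomAttractor C KC) (hU : G.IsOSCWith U) (hUK : ∀ i, (U i ∩ K i).Nonempty)
    (hCU : ∀ i, C i ⊆ closure (U i)) (hv : G.IsPerronVector s v)
    (hC : ∀ i, P.mass s i (restrictTime (Ici 0) fun _ => C i) < ⊤) :
    ∃ T₀, Summable ({p | T₀ ≤ (P.walk hτ hv).time p}.indicator fun p => |(P.walk hτ hv).defect
      (fun p => scaledCover s (KC p.1) ((P.walk hτ hv).time p) / v p.1) p|) := by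
  obtain ⟨t₀, hcollar⟩ := P.exists_mass_collar_lt_top hτ hs hK hKC hU hUK hv hC
  obtain ⟨_, R, _, hR⟩ := G.exists_len_mem_Icc
  have hbound : Summable fun p : V × ℤ => P.defectBound s C U KC t₀ p.1 p.2 / v p.1 := by
    refine (summable_prod_of_nonneg fun p => ?_).2 ⟨fun i => ?_, ?_⟩
    · exact div_nonneg defectBound_nonneg (hv.1 p.1).le
    · exact (summable_defectBound hC hcollar i).div_const (v i)
    · exact .of_finite
  refine ⟨max 0 (t₀ + R), .of_nonneg_of_le (fun p => indicator_nonneg (fun _ _ => abs_nonneg _) p)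
    (fun p => ?_) hbound⟩
  refine indicator_apply_le' (fun hp => ?_) fun _ => ?_
  · exact abs_walk_defect_le hτ hKC hU (hKC.subset_closure hU hCU) hv (fun e => (hR e).2) p hp
  · exact div_nonneg defectBound_nonneg (hv.1 p.1).le

theorem exists_tendsto_scaledCover_div [Nonempty V] (hτ : 0 < τ) (hs : 0 ≤ s)
    (hSC : G.StronglyConnected) (hGM : τ ∈ G.GM) (hK : G.IsAttractor K)
    (hKC : G.IsInhomAttractor C KC) (hU : G.IsOSCWith U) (hUK : ∀ i, (U i ∩ K i).Nonempty)
    (hCU : ∀ i, C i ⊆ closure (U i)) (hv : G.IsPerronVector s v)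
    (hC : ∀ i, P.mass s i (restrictTime (Ici 0) fun _ => C i) < ⊤) :
    ∃ L, ∀ i, Tendsto
      (fun n : ℤ => scaledCover s (KC i) (n * τ + P.pot i) / v i) atTop (𝓝 L) := by
  obtain ⟨T₀, hT₀⟩ := exists_summable_walk_defect hτ hs hK hKC hU hUK hCU hv hC
  exact LatticeWalk.exists_tendsto_of_summable_defect
    (fun Z hne hZ => P.exists_forall_le_mem hSC hτ hGM hne hZ) hT₀

theorem exists_tendsto_scaledCover [Nonempty V] (P : LatticePotential G τ) (hτ : 0 < τ)
    (hs : 0 ≤ s) (hSC : G.StronglyConnected) (hGM : τ ∈ G.GM) (hK : G.IsAttractor K)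
    (hKC : G.IsInhomAttractor C KC) (hU : G.IsOSCWith U) (hUK : ∀ i, (U i ∩ K i).Nonempty)
    (hCU : ∀ i, C i ⊆ closure (U i)) (hv : G.IsPerronVector s v)
    (hint : ∀ i, ∫⁻ t in Ioi 0, ENNReal.ofReal (scaledCover s (C i) t) < ⊤) (i : V) (y : ℝ) :
    ∃ L, Tendsto (fun n : ℤ => scaledCover s (KC i) (n * τ + y)) atTop (𝓝 L) := by
  let P' := P.shift (y - P.pot i)
  have hC (j : V) : P'.mass s j (restrictTime (Ici 0) fun _ => C j) < ⊤ :=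
    P'.mass_restrictTime_Ici_lt_top_of_lintegral hτ hs
      ((hKC.isBounded j).subset (hKC.condensation_subset j)) (hint j) j
  have hpot : P'.pot i = y := add_sub_cancel (P.pot i) y
  obtain ⟨L, hL⟩ := exists_tendsto_scaledCover_div hτ hs hSC hGM hK hKC hU hUK hCU hv hC
  refine ⟨L * v i, ((hL i).mul_const (v i)).congr fun n => ?_⟩
  rw [hpot, div_mul_cancel₀ _ (hv.1 i).ne']

end LatticePotential

theorem stmt2 {d : ℕ} {V E : Type} [Fintype V] [Fintype E] [DecidableEq V]
    (G : MWGraph d V E) (hSC : G.StronglyConnected)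
    (C K KC U : V → Set (Pt d))
    (hC : G.IsCondensation C) (hK : G.IsAttractor K) (hKC : G.IsInhomAttractor C KC)
    (hU : G.IsOSCWith U) (hUK : ∀ i, (U i ∩ K i).Nonempty)
    (hCU : ∀ i, C i ⊆ closure (U i))
    (s0 : ℝ) (hs0 : IsS0 G s0)
    (hint : ∀ i : V, ∫⁻ t in Set.Ioi (0 : ℝ),
      ENNReal.ofReal (Real.exp (-s0 * t) * (coveringNumber (C i) (Real.exp (-t)) : ℝ)) < ⊤)
    (τ : ℝ) (hτ : 0 < τ) (hGM : G.GM = {x : ℝ | ∃ n : ℤ, x = n * τ}) :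
    ∀ i : V, ∃ (δ : ℝ) (h : ℝ → ℝ), 0 < δ ∧ (∀ x, δ ≤ h x) ∧ (∀ x, h (x + τ) = h x) ∧
      ∀ y ∈ Set.Ico (0 : ℝ) τ,
        Tendsto (fun n : ℕ => (coveringNumber (KC i) (Real.exp (-(n * τ + y))) : ℝ) /
          (h y * Real.exp (s0 * (n * τ + y)))) atTop (𝓝 1) := by
  intro i
  have : Nonempty V := ⟨i⟩
  have hτG : τ ∈ G.GM := hGM ▸ ⟨1, by simp⟩
  obtain ⟨P⟩ := LatticePotential.nonempty_of_GM hSC hGM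
  obtain ⟨v, hv⟩ := MWGraph.exists_isPerronVector hSC hs0.2
  obtain ⟨δ, hδ, hlow⟩ :=
    MWGraph.exists_pos_eventually_le_scaledCover hK hKC hU hUK hs0.1 hv i
  obtain ⟨h, hδh, hper, hlim⟩ := exists_periodic_tendsto hτ
    (P.exists_tendsto_scaledCover hτ hs0.1 hSC hτG hK hKC hU hUK hCU hv hint i) hlow
  refine ⟨δ, h, hδ, hδh, hper, fun y _ => ?_⟩
  have hne : h y ≠ 0 := (hδ.trans_le (hδh y)).ne'
  rw [← div_self hne]
  refine (((hlim y).comp tendsto_natCast_atTop_atTop).div_const (h y)).congr fun n => ?_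
  simp only [Function.comp_apply, Int.cast_natCast, scaledCover, neg_mul, Real.exp_neg (s0 * _)]
  field_simp
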